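/- arXiv:2603.04121 — 2 statements merged into one kernel-verified Lean document; each statement's English description precedes it below -/
import Mathlib

section
/- Let 𝓡 > 0 and let h be a nonnegative continuous weak solution of v∂ₓh − ∂_vvh = 0 in (0,𝓡³)×(−𝓡,𝓡). (a) For every v₀ ∈ [0, 𝓡/2] and all x₀, x₁ with 0 < x₀ ≤ x₁ < 𝓡³/2 there is a constant c > 0 depending only on x₀, v₀ and 𝓡 such that h(x₀, v₀) ≤ c · h(x₁, v₀). (b) If moreover h extends continuously to ({0}×(−𝓡,0)) ∪ ((0,𝓡³)×(−𝓡,𝓡)), then for every v₀ ∈ [−𝓡/2, 0) and all x₀, x₁ with 0 ≤ x₀ ≤ x₁ < 𝓡³/2 there is a constant c > 0 depending only on |v₀| and 𝓡 such that h(x₁, v₀) ≤ c · h(x₀, v₀). -/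
/-!
Both parts follow from a one-sided Harnack inequality (`harnack_step`) in kinetic scaling, applied
along a chain of points with fixed velocity (`chain_le`).

A solution `h` of `v ∂ₓh = ∂ᵥᵥh` is a time-independent solution of a Kolmogorov equation: for any
base point `(y, w)` and scale `r`, the function `U(t, x, v) = h(y + r²wt + r³x, w + rv)` solves
`∂ₜU + v ∂ₓU = ∂ᵥᵥU`, because the drift `r²wt` makes up for freezing the velocity at `w`. Hence
pairing `h ≥ 0` with a compactly supported test function `ψ(t, x, v)` read in these coordinates
(`kinCoord`) gives a quantity that is nondecreasing in `t` as soon as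
`Lψ = ∂ₜψ + v ∂ₓψ + ∂ᵥᵥψ ≥ 0` (`pairing_monotone`); only the weak formulation is needed.

Let `Γ = kolK` be the explicit solution of `LΓ = 0` for `t < 0` which concentrates at `(0, 0)` as
`t ↑ 0`. Two test functions are built from it.

* `subTest η = F(Γ + η(t − 1))`, where `F(y) = y e^{-1/y}` for `y > 0` and `F = 0` otherwise. As `F`
  is convex and nondecreasing, `L(subTest η) ≥ η F'(Γ + η(t − 1)) ≥ 0`, and since the level sets
  of `Γ` are bounded and shrink linearly in `x` (`kolK_level`), the support is compact. Its pairing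
  with `h` is at most a multiple of `h(y, w)` as `t ↑ 0` (`sub_pairing_limit`).
* `cutTest c`, the kernel `Γ` times a smooth cutoff. Its image under `L` is bounded, because the
  derivatives of the cutoff vanish near the singularity. Shifted to concentrate at
  `t = -1, x = δ`, its pairing is at least a multiple of `h(y − r²w + r³δ, w)` as `t ↑ -1`
  (`cut_pairing_limit`).

For `k` large, `Φ = k · subTest η − (shifted cutTest c)` satisfies `LΦ ≥ 0` on `-3 < t < -1` and
`Φ ≥ 0` at `t = -2`, since on the support of the cutoff both `F` and `F'` are bounded below there.
Monotonicity of the pairings with `Φ` and with `subTest η` gives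
`h(y − r²w + r³δ, w) ≤ C h(y, w)` with `C` universal, whenever the cone supporting the test
functions lies in the domain.

For `w = v₀ ≠ 0` take `δ = 0`: the point is displaced by `r²v₀`, to the left or to the right
according to the sign of `v₀`. For `v₀ = 0` take `δ = -1`: the point is displaced by `-r³`. In
part (b) the vertex `(y, w)` may lie on `{x = 0}`: for `v₀ < 0` and `r` small the cone points into
`x > 0`, and only continuity of `h` up to the vertex is used. A bounded number of steps joins the
two points.
-/

noncomputable section

open MeasureTheory Set Filter
open scoped ENNReal

/-- The one-dimensional phase space, with points `p = (x, v)`. -/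
abbrev P2 : Type := ℝ × ℝ

/-- `hv` is the weak derivative of `h` in the second (velocity) variable on `D`. -/
def IsWeakVDeriv (D : Set P2) (h hv : P2 → ℝ) : Prop :=
  ∀ ψ : P2 → ℝ, ContDiff ℝ ((⊤ : ℕ∞) : WithTop ℕ∞) ψ → HasCompactSupport ψ →
    tsupport ψ ⊆ D →
    (∫ p in D, h p * fderiv ℝ ψ p ((0:ℝ), (1:ℝ))) = -∫ p in D, hv p * ψ p

/-- The box `H_r = (0, r³) × (−r, r)`. -/
def Hrect (r : ℝ) : Set P2 := Set.Ioo (0:ℝ) (r ^ 3) ×ˢ Set.Ioo (-r) r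

/-- Weak solution of `v ∂ₓ h − ∂ᵥᵥ h = 0` in `(0,R³) × (−R,R)` with `h = 0` on `{0} × (0,R)`. -/
def IsWeakSolRect (R : ℝ) (h hv : P2 → ℝ) : Prop :=
  LocallyIntegrableOn (fun p => h p ^ 2) (Hrect R) ∧
  LocallyIntegrableOn (fun p => hv p ^ 2) (Hrect R) ∧
  IsWeakVDeriv (Hrect R) h hv ∧
  ∀ ψ : P2 → ℝ, ContDiff ℝ ((⊤ : ℕ∞) : WithTop ℕ∞) ψ → HasCompactSupport ψ →
    tsupport ψ ⊆ Set.Ico 0 (R ^ 3) ×ˢ Set.Ioo (-R) R →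
    tsupport ψ ∩ {p : P2 | p.1 = 0} ⊆ {(0:ℝ)} ×ˢ Set.Ioo (0:ℝ) R →
    (-∫ p in Hrect R, h p * (p.2 * fderiv ℝ ψ p ((1:ℝ), (0:ℝ))))
        + (∫ p in Hrect R, hv p * fderiv ℝ ψ p ((0:ℝ), (1:ℝ))) = 0

/-- Weak solution of `v ∂ₓ h − ∂ᵥᵥ h = 0` in an (open) set `Q` (interior notion, no
boundary condition). -/
def IsWeakSolOpen (Q : Set P2) (h hv : P2 → ℝ) : Prop :=
  LocallyIntegrableOn (fun p => h p ^ 2) Q ∧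
  LocallyIntegrableOn (fun p => hv p ^ 2) Q ∧
  IsWeakVDeriv Q h hv ∧
  ∀ ψ : P2 → ℝ, ContDiff ℝ ((⊤ : ℕ∞) : WithTop ℕ∞) ψ → HasCompactSupport ψ →
    tsupport ψ ⊆ Q →
    (-∫ p in Q, h p * (p.2 * fderiv ℝ ψ p ((1:ℝ), (0:ℝ))))
        + (∫ p in Q, hv p * fderiv ℝ ψ p ((0:ℝ), (1:ℝ))) = 0

/-! ### The profile and the Kolmogorov kernel -/

/-- The smooth convex nondecreasing function `F(y) = y e^{-1/y}` for `y > 0`, extended by `0`. -/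
def convF (y : ℝ) : ℝ := y * expNegInvGlue y

/-- The first derivative of `convF`. -/
def convF1 (y : ℝ) : ℝ := (1 + y⁻¹) * expNegInvGlue y

/-- The second derivative of `convF`. -/
def convF2 (y : ℝ) : ℝ := y⁻¹ ^ 3 * expNegInvGlue y

lemma convF_contDiff {n : ℕ∞} : ContDiff ℝ n convF := contDiff_id.mul expNegInvGlue.contDiff

lemma convF_hasDerivAt (y : ℝ) : HasDerivAt convF (convF1 y) y := by
  have h := expNegInvGlue.hasDerivAt_polynomial_eval_inv_mul 1 y
  simp only [Polynomial.eval_one, one_mul] at h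
  have h2 := (hasDerivAt_id y).mul h
  refine h2.congr_deriv ?_
  simp only [convF1, Polynomial.derivative_one, sub_zero, mul_one, Polynomial.eval_pow,
    Polynomial.eval_X, id]
  rcases eq_or_ne y 0 with rfl | hy
  · simp
  · field_simp

lemma convF1_hasDerivAt (y : ℝ) : HasDerivAt convF1 (convF2 y) y := by
  have h := expNegInvGlue.hasDerivAt_polynomial_eval_inv_mul (1 + Polynomial.X) y
  simp only [Polynomial.eval_one, Polynomial.eval_add, Polynomial.eval_X] at h
  refine h.congr_deriv ?_
  simp [convF2]
  left; ring_nf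

lemma convF_nonneg (y : ℝ) : 0 ≤ convF y := by
  rcases le_total y 0 with hy | hy
  · simp [convF, expNegInvGlue.zero_of_nonpos hy]
  · exact mul_nonneg hy (expNegInvGlue.nonneg y)

lemma convF1_nonneg (y : ℝ) : 0 ≤ convF1 y := by
  rcases le_total y 0 with hy | hy
  · simp [convF1, expNegInvGlue.zero_of_nonpos hy]
  · exact mul_nonneg (by positivity) (expNegInvGlue.nonneg y)

lemma convF2_nonneg (y : ℝ) : 0 ≤ convF2 y := by
  rcases le_total y 0 with hy | hy
  · simp [convF2, expNegInvGlue.zero_of_nonpos hy]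
  · exact mul_nonneg (by positivity) (expNegInvGlue.nonneg y)

lemma glue_le {η y : ℝ} (hη : 0 < η) (hy : η ≤ y) : expNegInvGlue η ≤ expNegInvGlue y := by
  rw [expNegInvGlue, expNegInvGlue, if_neg (by linarith), if_neg (by linarith)]
  gcongr

lemma convF_ge {η y : ℝ} (hη : 0 < η) (hy : η ≤ y) : η * expNegInvGlue η ≤ convF y :=
  mul_le_mul hy (glue_le hη hy) (expNegInvGlue.nonneg _) (by linarith)

lemma convF1_ge {η y : ℝ} (hη : 0 < η) (hy : η ≤ y) : expNegInvGlue η ≤ convF1 y := by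
  have h0 : 0 < y := by linarith
  have : 1 * expNegInvGlue y ≤ convF1 y := by
    apply mul_le_mul_of_nonneg_right _ (expNegInvGlue.nonneg _)
    have : 0 < y⁻¹ := by positivity
    linarith
  linarith [glue_le hη hy]

lemma convF_le {y z : ℝ} (hz : 0 ≤ z) (hy : y ≤ z) : convF y ≤ z := by
  rcases le_total y 0 with h | h
  · simpa [convF, expNegInvGlue.zero_of_nonpos h] using hz
  · have : expNegInvGlue y ≤ 1 := by
      rw [expNegInvGlue]
      split_ifs
      · norm_num
      · exact Real.exp_le_one_iff.2 (by simpa using h)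
    unfold convF; nlinarith

lemma convF_pos_arg {y : ℝ} (h : convF y ≠ 0) : 0 < y := by
  by_contra hy
  exact h (by simp [convF, expNegInvGlue.zero_of_nonpos (not_lt.1 hy)])

/-- The Kolmogorov kernel `Γ(t, x, v)` in backward time, meaningful for `t < 0` and without its
normalizing constant; with `s = -t` it reads `s⁻² exp(-(v²/s + 3xv/s² + 3x²/s³))`. It solves
`∂ₜΓ + v ∂ₓΓ + ∂ᵥᵥΓ = 0`. -/
def kolK (p : ℝ × ℝ × ℝ) : ℝ :=
  (p.1 ^ 2)⁻¹ * Real.exp (p.2.2 ^ 2 / p.1 - 3 * p.2.1 * p.2.2 / p.1 ^ 2 + 3 * p.2.1 ^ 2 / p.1 ^ 3)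

lemma kolK_contDiffAt {p : ℝ × ℝ × ℝ} (hp : p.1 < 0) {n} : ContDiffAt ℝ n kolK p := by
  have h1 : p.1 ≠ 0 := hp.ne
  unfold kolK
  have : p.1 ^ 2 ≠ 0 := pow_ne_zero _ h1
  have : p.1 ^ 3 ≠ 0 := pow_ne_zero _ h1
  fun_prop (disch := assumption)

lemma kolK_t {t x v : ℝ} (ht : t < 0) : HasDerivAt (fun τ => kolK (τ, x, v))
    ((-2 / t - v ^ 2 / t ^ 2 + 6 * x * v / t ^ 3 - 9 * x ^ 2 / t ^ 4) * kolK (t, x, v)) t := by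
  have h0 : t ≠ 0 := ht.ne
  have h2 : HasDerivAt (fun τ : ℝ => τ ^ 2) (2 * t) t := by simpa using hasDerivAt_pow 2 t
  have h3 : HasDerivAt (fun τ : ℝ => τ ^ 3) (3 * t ^ 2) t := by simpa using hasDerivAt_pow 3 t
  have e := (((((hasDerivAt_const t (v ^ 2)).div (hasDerivAt_id t) h0).sub
    ((hasDerivAt_const t (3 * x * v)).div h2 (pow_ne_zero 2 h0))).add
    ((hasDerivAt_const t (3 * x ^ 2)).div h3 (pow_ne_zero 3 h0))).exp)
  have f := (h2.inv (pow_ne_zero 2 h0)).mul e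
  refine f.congr_deriv ?_
  simp [kolK]
  field_simp
  ring

lemma kolK_x {t x v : ℝ} (ht : t < 0) : HasDerivAt (fun y => kolK (t, y, v))
    ((-3 * v / t ^ 2 + 6 * x / t ^ 3) * kolK (t, x, v)) x := by
  have h0 : t ≠ 0 := ht.ne
  have h2 : HasDerivAt (fun τ : ℝ => τ ^ 2) (2 * x) x := by simpa using hasDerivAt_pow 2 x
  have e := ((((hasDerivAt_const x (v ^ 2 / t)).sub
    (((((hasDerivAt_id x).const_mul 3).mul_const v)).div_const (t ^ 2))).add
    ((h2.const_mul 3).div_const (t ^ 3))).exp).const_mul ((t ^ 2)⁻¹)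
  refine e.congr_deriv ?_
  simp [kolK]
  field_simp
  ring

lemma kolK_v {t x v : ℝ} (ht : t < 0) : HasDerivAt (fun w => kolK (t, x, w))
    ((2 * v / t - 3 * x / t ^ 2) * kolK (t, x, v)) v := by
  have h0 : t ≠ 0 := ht.ne
  have h2 : HasDerivAt (fun τ : ℝ => τ ^ 2) (2 * v) v := by simpa using hasDerivAt_pow 2 v
  have e := ((((h2.div_const t).sub
    ((((hasDerivAt_id v).const_mul (3 * x))).div_const (t ^ 2))).add_const
    (3 * x ^ 2 / t ^ 3)).exp).const_mul ((t ^ 2)⁻¹)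
  refine e.congr_deriv ?_
  simp [kolK]
  field_simp

lemma kolK_vv {t x v : ℝ} (ht : t < 0) :
    HasDerivAt (fun w => (2 * w / t - 3 * x / t ^ 2) * kolK (t, x, w))
    ((2 / t + (2 * v / t - 3 * x / t ^ 2) ^ 2) * kolK (t, x, v)) v := by
  have h1 : HasDerivAt (fun w : ℝ => 2 * w / t - 3 * x / t ^ 2) (2 / t) v := by
    simpa using (((hasDerivAt_id v).const_mul 2).div_const t).sub_const (3 * x / t ^ 2)
  refine (h1.mul (kolK_v ht)).congr_deriv ?_
  ring

/-- The equation `∂ₜΓ + v ∂ₓΓ + ∂ᵥᵥΓ = 0`, with the derivatives written out as in `kolK_t`,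
`kolK_x` and `kolK_vv`. -/
lemma kolK_eq {t x v : ℝ} (ht : t < 0) :
    (-2 / t - v ^ 2 / t ^ 2 + 6 * x * v / t ^ 3 - 9 * x ^ 2 / t ^ 4) * kolK (t, x, v)
      + v * ((-3 * v / t ^ 2 + 6 * x / t ^ 3) * kolK (t, x, v))
      + (2 / t + (2 * v / t - 3 * x / t ^ 2) ^ 2) * kolK (t, x, v) = 0 := by
  have h0 : t ≠ 0 := ht.ne
  field_simp
  ring

lemma kolK_pos {t x v : ℝ} (ht : t < 0) : 0 < kolK (t, x, v) := by
  have h0 : t ≠ 0 := ht.ne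
  unfold kolK; positivity

/-- Gaussian upper bound without the mixed term, from positive definiteness of the quadratic form
`v² + 3xv + 3x²`. -/
lemma kolK_le {s x v : ℝ} (hs : 0 < s) :
    kolK (-s, x, v) ≤ (s ^ 2)⁻¹ * Real.exp (-((v ^ 2 / s + x ^ 2 / s ^ 3) / 8)) := by
  unfold kolK
  simp only [neg_sq]
  gcongr
  have : v ^ 2 / -s - 3 * x * v / s ^ 2 + 3 * x ^ 2 / (-s) ^ 3
    = -((v ^ 2 / s + x ^ 2 / s ^ 3) / 8)
     - (7 / 8 * (v + 12 / 7 * (x / s)) ^ 2 + (23 / 8 - 18 / 7) * (x / s) ^ 2) / s := by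
    field_simp
    ring
  rw [this]
  have : 0 ≤ (7 / 8 * (v + 12 / 7 * (x / s)) ^ 2 + (23 / 8 - 18 / 7) * (x / s) ^ 2) / s := by
    have : (0:ℝ) ≤ 23 / 8 - 18 / 7 := by norm_num
    positivity
  linarith

lemma exp_neg_le_pow {z : ℝ} (hz : 0 < z) (n : ℕ) : Real.exp (-z) ≤ n.factorial / z ^ n := by
  rw [Real.exp_neg, ← inv_div]
  have := Real.pow_div_factorial_le_exp z hz.le n
  gcongr

/-- Lower bound at unit times, on the set where the shifted cutoff lives. -/
lemma kolK_lower {s x v : ℝ} (hs : 1 ≤ s) (hs3 : s ≤ 3) (hx : |x| ≤ 2) (hv : |v| ≤ 1) :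
    Real.exp (-19) / 9 ≤ kolK (-s, x, v) := by
  have hs0 : 0 < s := by linarith
  unfold kolK
  simp only [neg_sq]
  rw [div_eq_inv_mul]
  have h9 : s ^ 2 ≤ 9 := by nlinarith
  gcongr
  have e1 : v ^ 2 / s ≤ 1 := by
    rw [div_le_one hs0]; nlinarith [abs_le.1 hv]
  have e2 : 3 * x * v / s ^ 2 ≤ 6 := by
    rw [div_le_iff₀ (by positivity)]
    have : |x * v| ≤ 2 * 1 := by rw [abs_mul]; gcongr
    nlinarith [abs_le.1 this]
  have e3 : 3 * x ^ 2 / s ^ 3 ≤ 12 := by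
    rw [div_le_iff₀ (by positivity)]
    have : x ^ 2 ≤ 4 := by nlinarith [abs_le.1 hx]
    have : 1 ≤ s ^ 3 := one_le_pow₀ hs
    nlinarith
  have e4 : v ^ 2 / -s = - (v ^ 2 / s) := by rw [div_neg]
  have e5 : 3 * x ^ 2 / (-s) ^ 3 = - (3 * x ^ 2 / s ^ 3) := by
    rw [show (-s) ^ 3 = - s ^ 3 by ring, div_neg]
  rw [e4, e5]; linarith

/-- Lower bound in the kinetic box of size `σ` at time `-σ²`, of the order of the maximum of `Γ`. -/
lemma kolK_lower' {σ x v : ℝ} (hs : 0 < σ) (hx : |x| ≤ σ ^ 3) (hv : |v| ≤ σ) :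
    Real.exp (-7) * (σ ^ 4)⁻¹ ≤ kolK (-σ ^ 2, x, v) := by
  unfold kolK
  simp only [neg_sq]
  rw [mul_comm, ← pow_mul]
  gcongr
  have h1 : x / σ ^ 3 ≤ 1 := by rw [div_le_one (by positivity)]; exact (abs_le.1 hx).2
  have h2 : -1 ≤ x / σ ^ 3 := by rw [le_div_iff₀ (by positivity)]; linarith [(abs_le.1 hx).1]
  have h3 : v / σ ≤ 1 := by rw [div_le_one (by positivity)]; exact (abs_le.1 hv).2
  have h4 : -1 ≤ v / σ := by rw [le_div_iff₀ (by positivity)]; linarith [(abs_le.1 hv).1]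
  have : v ^ 2 / -σ ^ 2 - 3 * x * v / (σ ^ (2 * 2)) + 3 * x ^ 2 / (-σ ^ 2) ^ 3
    = - ((v / σ) ^ 2 + 3 * (x / σ ^ 3) * (v / σ) + 3 * (x / σ ^ 3) ^ 2) := by
    field_simp
    ring
  rw [this]
  generalize x / σ ^ 3 = a at *
  generalize v / σ = b at *
  nlinarith

/-- The superlevel sets of `Γ` lie in a cone `|x| ≤ M s`, and their extent in `v` tends to `0` with
`s`. The cone condition lets the vertex of the support sit on the boundary of the domain. -/
lemma kolK_level {η : ℝ} (hη : 0 < η) : ∃ M : ℝ, 3 ≤ M ∧ ∀ s x v : ℝ, 0 < s → s ≤ 3 →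
    η ≤ kolK (-s, x, v) → |x| ≤ M * s ∧ |v| ≤ M ∧ v ^ 6 ≤ M * s := by
  set C : ℝ := 8 ^ 3 * 6 / η with hC
  have hC0 : 0 < C := by positivity
  refine ⟨3 + 3 * C, by linarith, fun s x v hs hs3 hk => ?_⟩
  have key : ∀ w : ℝ, 0 < w → w / 8 ≤ (v ^ 2 / s + x ^ 2 / s ^ 3) / 8 →
      w ^ 3 * s ^ 2 ≤ C := by
    intro w hw hle
    have h1 := hk.trans (kolK_le hs)
    have h2 : Real.exp (-((v ^ 2 / s + x ^ 2 / s ^ 3) / 8)) ≤ Real.exp (-(w / 8)) := by gcongr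
    have h3 := exp_neg_le_pow (z := w / 8) (by positivity) 3
    have h4 : η ≤ (s ^ 2)⁻¹ * ((Nat.factorial 3 : ℕ) / (w / 8) ^ 3) :=
      h1.trans (mul_le_mul_of_nonneg_left (h2.trans h3) (by positivity))
    rw [hC, le_div_iff₀ hη]
    have h5 : (s ^ 2)⁻¹ * ((Nat.factorial 3 : ℕ) / (w / 8) ^ 3) = 8 ^ 3 * 6 / (w ^ 3 * s ^ 2) := by
      norm_num [Nat.factorial]
      field_simp
      norm_num
    rw [h5, le_div_iff₀ (by positivity)] at h4
    linarith
  have hxx : x ^ 6 ≤ C * s ^ 7 := by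
    rcases eq_or_ne x 0 with rfl | hx
    · simp; positivity
    · have := key (x ^ 2 / s ^ 3) (by positivity) (by
        have : 0 ≤ v ^ 2 / s := by positivity
        linarith)
      have e : (x ^ 2 / s ^ 3) ^ 3 * s ^ 2 = x ^ 6 / s ^ 7 := by field_simp
      rwa [e, div_le_iff₀ (by positivity)] at this
  have hvv : v ^ 6 ≤ C * s := by
    rcases eq_or_ne v 0 with rfl | hx
    · simp; positivity
    · have := key (v ^ 2 / s) (by positivity) (by
        have : 0 ≤ x ^ 2 / s ^ 3 := by positivity
        linarith)
      have e : (v ^ 2 / s) ^ 3 * s ^ 2 = v ^ 6 / s := by field_simp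
      rwa [e, div_le_iff₀ (by positivity)] at this
  have hM : 3 * C ≤ (3 + 3 * C) ^ 6 := by
    calc 3 * C ≤ 3 + 3 * C := by linarith
      _ ≤ _ := le_self_pow₀ (by linarith) (by norm_num)
  refine ⟨?_, ?_, ?_⟩
  · refine abs_le_of_sq_le_sq ?_ (by positivity)
    refine le_of_not_gt fun hlt => ?_
    have : (((3 + 3 * C) * s) ^ 2) ^ 3 < (x ^ 2) ^ 3 := by gcongr
    have h7 : C * s ^ 7 ≤ (3 * C) * s ^ 6 := by
      have : 0 < C * s ^ 6 := by positivity
      nlinarith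
    have : (3 * C) * s ^ 6 ≤ (3 + 3 * C) ^ 6 * s ^ 6 := by gcongr
    nlinarith
  · refine abs_le_of_sq_le_sq ?_ (by positivity)
    refine le_of_not_gt fun hlt => ?_
    have : ((3 + 3 * C) ^ 2) ^ 3 < (v ^ 2) ^ 3 := by gcongr
    nlinarith
  · nlinarith

/-! ### Pairing a weak solution with test functions -/

lemma isOpen_Hrect (R : ℝ) : IsOpen (Hrect R) := isOpen_Ioo.prod isOpen_Ioo

lemma integrableOn_mul_of_support {Q K : Set P2} {h g : P2 → ℝ} (hQ : IsOpen Q)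
    (hc : ContinuousOn h Q) (hK : IsCompact K) (hKQ : K ⊆ Q) (hg : Continuous g)
    (hs : ∀ p, g p ≠ 0 → p ∈ K) : IntegrableOn (fun p => h p * g p) Q := by
  have h1 : IntegrableOn (fun p => h p * g p) K :=
    ((hc.mono hKQ).mul hg.continuousOn).integrableOn_compact hK
  refine h1.of_forall_sdiff_eq_zero hQ.measurableSet ?_
  intro p hp
  have : g p = 0 := by
    by_contra hne
    exact hp.2 (hs p hne)
  simp [this]

/-- The weak formulation with both derivatives on the test function: `h` annihilates
`v ∂ₓg + ∂ᵥᵥg`. The weak derivative `hv` is removed by testing its definition with `∂ᵥg`. -/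
lemma weak_identity {Q K : Set P2} {h hv g gx gv gvv : P2 → ℝ} (hQ : IsOpen Q)
    (hsol : IsWeakSolOpen Q h hv) (hc : ContinuousOn h Q)
    (hK : IsCompact K) (hKQ : K ⊆ Q) (hg : ContDiff ℝ ((⊤ : ℕ∞) : WithTop ℕ∞) g)
    (hs : ∀ p, g p ≠ 0 → p ∈ K)
    (hx : ∀ p : P2, HasDerivAt (fun y => g (y, p.2)) (gx p) p.1)
    (hgv : ∀ p : P2, HasDerivAt (fun w => g (p.1, w)) (gv p) p.2)
    (hgvv : ∀ p : P2, HasDerivAt (fun w => gv (p.1, w)) (gvv p) p.2) :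
    IntegrableOn (fun p => h p * (p.2 * gx p + gvv p)) Q ∧
      ∫ p in Q, h p * (p.2 * gx p + gvv p) = 0 := by
  have hcurve1 : ∀ p : P2, HasDerivAt (fun y : ℝ => ((y, p.2) : P2)) ((1:ℝ), (0:ℝ)) p.1 :=
    fun p => (hasDerivAt_id _).prodMk (hasDerivAt_const _ _)
  have hcurve2 : ∀ p : P2, HasDerivAt (fun w : ℝ => ((p.1, w) : P2)) ((0:ℝ), (1:ℝ)) p.2 :=
    fun p => (hasDerivAt_const _ _).prodMk (hasDerivAt_id _)
  have e1 : ∀ p, fderiv ℝ g p ((1:ℝ), (0:ℝ)) = gx p := fun p =>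
    ((((hg.differentiable (by simp)) p).hasFDerivAt).comp_hasDerivAt p.1 (hcurve1 p)).unique (hx p)
  have e2 : ∀ p, fderiv ℝ g p ((0:ℝ), (1:ℝ)) = gv p := fun p =>
    ((((hg.differentiable (by simp)) p).hasFDerivAt).comp_hasDerivAt p.2 (hcurve2 p)).unique (hgv p)
  have e2' : gv = fun p => fderiv ℝ g p ((0:ℝ), (1:ℝ)) := funext fun p => (e2 p).symm
  have e1' : gx = fun p => fderiv ℝ g p ((1:ℝ), (0:ℝ)) := funext fun p => (e1 p).symm
  have hgvs : ContDiff ℝ ((⊤ : ℕ∞) : WithTop ℕ∞) gv := by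
    rw [e2']
    exact (hg.fderiv_right (m := ((⊤ : ℕ∞) : WithTop ℕ∞)) (by simp)).clm_apply contDiff_const
  have hgxs : Continuous gx := by
    rw [e1']
    exact (hg.continuous_fderiv (by simp)).clm_apply continuous_const
  have e3 : ∀ p, fderiv ℝ gv p ((0:ℝ), (1:ℝ)) = gvv p := fun p =>
    ((((hgvs.differentiable (by simp)) p).hasFDerivAt).comp_hasDerivAt p.2
      (hcurve2 p)).unique (hgvv p)
  have hgvvs : Continuous gvv := by
    rw [show gvv = fun p => fderiv ℝ gv p ((0:ℝ), (1:ℝ)) from funext fun p => (e3 p).symm]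
    exact (hgvs.continuous_fderiv (by simp)).clm_apply continuous_const
  have ts : tsupport g ⊆ K := closure_minimal (fun p hp => hs p hp) hK.isClosed
  have cs : HasCompactSupport g := hK.of_isClosed_subset (isClosed_tsupport g) ts
  have tsv : tsupport gv ⊆ tsupport g := by
    rw [e2']; exact tsupport_fderiv_apply_subset ℝ _
  have csv : HasCompactSupport gv := hK.of_isClosed_subset (isClosed_tsupport _) (tsv.trans ts)
  have hsx : ∀ p, gx p ≠ 0 → p ∈ K := fun p hp => ts (by
    rw [e1'] at hp
    exact tsupport_fderiv_apply_subset ℝ _ (subset_tsupport _ hp))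
  have hsvv : ∀ p, gvv p ≠ 0 → p ∈ K := fun p hp => (tsv.trans ts) (by
    rw [← e3] at hp
    exact tsupport_fderiv_apply_subset ℝ ((0:ℝ), (1:ℝ))
      (subset_tsupport (fun p => fderiv ℝ gv p ((0:ℝ), (1:ℝ))) hp))
  obtain ⟨-, -, hw, hweak⟩ := hsol
  have h1 := hweak g hg cs (ts.trans hKQ)
  have h2 := hw gv hgvs csv ((tsv.trans ts).trans hKQ)
  simp only [e1, e2] at h1
  simp only [e3] at h2
  have i1 : IntegrableOn (fun p => h p * (p.2 * gx p)) Q :=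
    integrableOn_mul_of_support hQ hc hK hKQ (continuous_snd.mul hgxs)
      fun p hp => hsx p (right_ne_zero_of_mul hp)
  have i2 : IntegrableOn (fun p => h p * gvv p) Q :=
    integrableOn_mul_of_support hQ hc hK hKQ hgvvs hsvv
  have : (fun p => h p * (p.2 * gx p + gvv p)) = fun p => h p * (p.2 * gx p) + h p * gvv p := by
    funext p; ring
  refine ⟨by rw [this]; exact i1.add i2, ?_⟩
  rw [this, integral_add i1 i2]
  linarith

/-- Kinetic coordinates `(t, x, v)` of `P = (y + r²wt + r³x, w + rv)`: centred at `(y, w)`, with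
scale `r`, in the frame moving with velocity `w`. -/
def kinCoord (y w r : ℝ) (t : ℝ) (P : P2) : ℝ × ℝ × ℝ :=
  (t, (P.1 - y - r ^ 2 * w * t) / r ^ 3, (P.2 - w) / r)

/-- If `∂ₜψ + v ∂ₓψ + ∂ᵥᵥψ ≥ 0`, the pairing of `h ≥ 0` with `ψ` in moving kinetic coordinates is
nondecreasing in time. Differentiating under the integral produces `ψt - (w / r) ψx`; adding the
vanishing quantity of `weak_identity`, times `r²`, turns the integrand into `h` times
`ψt + v ψx + ψvv`. -/
lemma pairing_monotone {Q K : Set P2} {h hv : P2 → ℝ} {y w r a b : ℝ}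
    {ψ ψt ψx ψv ψvv : ℝ × ℝ × ℝ → ℝ} (hQ : IsOpen Q)
    (hsol : IsWeakSolOpen Q h hv) (hc : ContinuousOn h Q) (hpos : ∀ p ∈ Q, 0 ≤ h p)
    (hr : 0 < r) (hK : IsCompact K) (hKQ : K ⊆ Q)
    (hψ : ∀ t ∈ Ioo a b, ∀ x v, ContDiffAt ℝ ((⊤ : ℕ∞) : WithTop ℕ∞) ψ (t, x, v))
    (ht : ∀ t ∈ Ioo a b, ∀ x v, HasDerivAt (fun τ => ψ (τ, x, v)) (ψt (t, x, v)) t)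
    (hx : ∀ t ∈ Ioo a b, ∀ x v, HasDerivAt (fun ξ => ψ (t, ξ, v)) (ψx (t, x, v)) x)
    (hv1 : ∀ t ∈ Ioo a b, ∀ x v, HasDerivAt (fun ν => ψ (t, x, ν)) (ψv (t, x, v)) v)
    (hv2 : ∀ t ∈ Ioo a b, ∀ x v, HasDerivAt (fun ν => ψv (t, x, ν)) (ψvv (t, x, v)) v)
    (hL : ∀ t ∈ Ioo a b, ∀ x v, 0 ≤ ψt (t, x, v) + v * ψx (t, x, v) + ψvv (t, x, v))
    (hs : ∀ t ∈ Ioo a b, ∀ P, ψ (kinCoord y w r t P) ≠ 0 → P ∈ K) :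
    MonotoneOn (fun t => ∫ P in Q, h P * ψ (kinCoord y w r t P)) (Ioo a b) := by
  have hr0 : r ≠ 0 := ne_of_gt hr
  -- the time derivative of the transported test function
  set Ψt : ℝ → P2 → ℝ := fun t P =>
    ψt (kinCoord y w r t P) - w / r * ψx (kinCoord y w r t P) with hΨt
  have hdt : ∀ t ∈ Ioo a b, ∀ P, HasDerivAt (fun τ => ψ (kinCoord y w r τ P)) (Ψt t P) t := by
    intro t htI P
    have hF := ((hψ t htI ((P.1 - y - r ^ 2 * w * t) / r ^ 3) ((P.2 - w) / r)).differentiableAt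
      (by simp)).hasFDerivAt
    have hc1 : HasDerivAt (fun τ => kinCoord y w r τ P) ((1:ℝ), (-(w / r)), (0:ℝ)) t := by
      refine (hasDerivAt_id t).prodMk (HasDerivAt.prodMk ?_ (hasDerivAt_const _ _))
      refine ((((hasDerivAt_id t).const_mul (r ^ 2 * w)).const_sub (P.1 - y)).div_const
        (r ^ 3)).congr_deriv ?_
      field_simp
    refine (hF.comp_hasDerivAt t hc1).congr_deriv ?_
    have e1 := (hF.comp_hasDerivAt t (f := fun τ => (τ, (P.1 - y - r ^ 2 * w * t) / r ^ 3,
      (P.2 - w) / r)) ((hasDerivAt_id t).prodMk ((hasDerivAt_const t _).prodMk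
        (hasDerivAt_const t _)))).unique (ht t htI _ _)
    have e2 := (hF.comp_hasDerivAt ((P.1 - y - r ^ 2 * w * t) / r ^ 3) (f := fun τ => (t, τ,
      (P.2 - w) / r)) ((hasDerivAt_const _ t).prodMk ((hasDerivAt_id _).prodMk
        (hasDerivAt_const _ _)))).unique (hx t htI _ _)
    rw [hΨt]
    simp only [kinCoord]
    rw [← e1, ← e2, ← smul_eq_mul (w / r), ← map_smul, ← map_sub]
    simp
  have hcoordP : ∀ t, ContDiff ℝ ((⊤ : ℕ∞) : WithTop ℕ∞) (kinCoord y w r t) := by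
    intro t; unfold kinCoord; fun_prop
  have hcoord : Continuous (fun z : ℝ × P2 => kinCoord y w r z.1 z.2) := by
    unfold kinCoord; fun_prop
  have hslice : ∀ t ∈ Ioo a b,
      ContDiff ℝ ((⊤ : ℕ∞) : WithTop ℕ∞) (fun P => ψ (kinCoord y w r t P)) := by
    intro t htI
    rw [contDiff_iff_contDiffAt]
    exact fun P => ContDiffAt.comp P (hψ t htI _ _) (hcoordP t).contDiffAt
  -- the weak equation tested with the time slice of `ψ`, multiplied by `r²`
  have hspace : ∀ t ∈ Ioo a b,
      IntegrableOn (fun P => h P * (r ^ 2 * (P.2 * (ψx (kinCoord y w r t P) / r ^ 3)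
        + ψvv (kinCoord y w r t P) / r / r))) Q ∧
      ∫ P in Q, h P * (r ^ 2 * (P.2 * (ψx (kinCoord y w r t P) / r ^ 3)
        + ψvv (kinCoord y w r t P) / r / r)) = 0 := by
    intro t htI
    have hh := weak_identity (g := fun P => ψ (kinCoord y w r t P))
      (gx := fun P => ψx (kinCoord y w r t P) / r ^ 3)
      (gv := fun P => ψv (kinCoord y w r t P) / r)
      (gvv := fun P => ψvv (kinCoord y w r t P) / r / r)
      hQ hsol hc hK hKQ (hslice t htI) (hs t htI) ?_ ?_ ?_
    · have e : ∀ P : P2, h P * (r ^ 2 * (P.2 * (ψx (kinCoord y w r t P) / r ^ 3)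
        + ψvv (kinCoord y w r t P) / r / r)) = r ^ 2 * (h P * (P.2 * (ψx (kinCoord y w r t P) / r ^ 3)
        + ψvv (kinCoord y w r t P) / r / r)) := fun P => by ring
      simp only [e]
      exact ⟨hh.1.const_mul _, by rw [integral_const_mul, hh.2, mul_zero]⟩
    · intro P
      have := (hx t htI ((P.1 - y - r ^ 2 * w * t) / r ^ 3) ((P.2 - w) / r)).comp P.1
        ((((hasDerivAt_id P.1).sub_const y).sub_const (r ^ 2 * w * t)).div_const (r ^ 3))
      refine this.congr_deriv ?_
      simp only [kinCoord]; ring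
    · intro P
      have := (hv1 t htI ((P.1 - y - r ^ 2 * w * t) / r ^ 3) ((P.2 - w) / r)).comp P.2
        (((hasDerivAt_id P.2).sub_const w).div_const r)
      refine this.congr_deriv ?_
      simp only [kinCoord]; ring
    · intro P
      have := ((hv2 t htI ((P.1 - y - r ^ 2 * w * t) / r ^ 3) ((P.2 - w) / r)).comp P.2
        (((hasDerivAt_id P.2).sub_const w).div_const r)).div_const r
      refine this.congr_deriv ?_
      simp only [kinCoord]; ring
  -- joint continuity of `Ψt`, which bounds it on compact sets for the dominated differentiation
  have hΨt_cont : ContinuousOn (fun z : ℝ × P2 => Ψt z.1 z.2) (Ioo a b ×ˢ univ) := by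
    have hop : IsOpen (Ioo a b ×ˢ (univ : Set (ℝ × ℝ))) := isOpen_Ioo.prod isOpen_univ
    have hcd : ContDiffOn ℝ ((⊤ : ℕ∞) : WithTop ℕ∞) (fun z : ℝ × P2 => ψ (kinCoord y w r z.1 z.2))
        (Ioo a b ×ˢ univ) := by
      intro z hz
      have : ContDiff ℝ ((⊤ : ℕ∞) : WithTop ℕ∞) (fun z : ℝ × P2 => kinCoord y w r z.1 z.2) := by
        unfold kinCoord; fun_prop
      exact (ContDiffAt.comp z (hψ z.1 hz.1 _ _) this.contDiffAt).contDiffWithinAt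
    have hcf := (hcd.continuousOn_fderiv_of_isOpen hop (by simp)).clm_apply
      (continuousOn_const (c := ((1:ℝ), ((0:ℝ), (0:ℝ)))))
    refine hcf.congr ?_
    intro z hz
    have hd := ((hcd.contDiffAt (hop.mem_nhds hz)).differentiableAt (by simp)).hasFDerivAt
    exact ((hd.comp_hasDerivAt z.1 (f := fun τ => (τ, z.2))
      ((hasDerivAt_id _).prodMk (hasDerivAt_const _ _))).unique (hdt z.1 hz.1 z.2)).symm
  have hΨt_supp : ∀ t ∈ Ioo a b, ∀ P ∉ K, Ψt t P = 0 := by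
    intro t htI P hP
    refine (hdt t htI P).unique ((hasDerivAt_const t (0:ℝ)).congr_of_eventuallyEq ?_)
    filter_upwards [isOpen_Ioo.mem_nhds htI] with τ hτ
    by_contra hne
    exact hP (hs τ hτ P hne)
  have hderiv : ∀ t ∈ Ioo a b, IntegrableOn (fun P => h P * Ψt t P) Q ∧
      HasDerivAt (fun t => ∫ P in Q, h P * ψ (kinCoord y w r t P))
        (∫ P in Q, h P * Ψt t P) t := by
    intro t htI
    obtain ⟨ρ, hρ, hball⟩ := Metric.nhds_basis_closedBall.mem_iff.1 (isOpen_Ioo.mem_nhds htI)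
    have hcomp : IsCompact (Metric.closedBall t ρ ×ˢ K) := (isCompact_closedBall t ρ).prod hK
    obtain ⟨B, hB⟩ := hcomp.exists_bound_of_continuousOn
      (hΨt_cont.mono (Set.prod_mono hball (subset_univ K)))
    have hhm : AEStronglyMeasurable h (volume.restrict Q) :=
      hc.aestronglyMeasurable hQ.measurableSet
    have h_int : IntegrableOn (fun P => ‖h P‖ * B) K :=
      ((hc.mono hKQ).norm.mul continuousOn_const).integrableOn_compact hK
    refine hasDerivAt_integral_of_dominated_loc_of_deriv_le (𝕜 := ℝ)
      (F := fun t P => h P * ψ (kinCoord y w r t P)) (F' := fun t P => h P * Ψt t P)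
      (s := Metric.closedBall t ρ) (bound := K.indicator (fun P => ‖h P‖ * B)) (Metric.closedBall_mem_nhds t hρ) ?_ ?_ ?_ ?_ ?_ ?_
    · filter_upwards [isOpen_Ioo.mem_nhds htI] with τ hτ
      exact hhm.mul (hslice τ hτ).continuous.aestronglyMeasurable
    · exact integrableOn_mul_of_support hQ hc hK hKQ (hslice t htI).continuous (hs t htI)
    · refine hhm.mul (Continuous.aestronglyMeasurable ?_)
      have : ContinuousOn (fun P : P2 => Ψt t P) univ :=
        hΨt_cont.comp (f := fun P : P2 => (t, P)) (by fun_prop) fun P _ => ⟨htI, mem_univ _⟩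
      exact continuousOn_univ.1 this
    · refine Eventually.of_forall fun P τ hτ => ?_
      by_cases hP : P ∈ K
      · rw [indicator_of_mem hP, norm_mul]
        gcongr
        exact hB (τ, P) ⟨hτ, hP⟩
      · simp [hΨt_supp τ (hball hτ) P hP, hP]
    · exact ((integrable_indicator_iff hK.measurableSet).2 h_int).integrableOn
    · exact Eventually.of_forall fun P τ hτ => (hdt τ (hball hτ) P).const_mul _
  refine monotoneOn_of_deriv_nonneg (convex_Ioo a b)
    (fun t htI => (hderiv t htI).2.continuousAt.continuousWithinAt) ?_ ?_
  · rw [interior_Ioo]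
    exact fun t htI => (hderiv t htI).2.differentiableAt.differentiableWithinAt
  · rw [interior_Ioo]
    intro t htI
    have hadd := integral_add (hderiv t htI).1 (hspace t htI).1
    rw [(hspace t htI).2, add_zero] at hadd
    rw [(hderiv t htI).2.deriv, ← hadd]
    refine setIntegral_nonneg hQ.measurableSet fun P hP => ?_
    rw [← mul_add]
    refine mul_nonneg (hpos P hP) ?_
    refine (hL t htI ((P.1 - y - r ^ 2 * w * t) / r ^ 3) ((P.2 - w) / r)).trans_eq ?_
    simp only [hΨt, kinCoord]
    field_simp
    ring

/-! ### The two test functions -/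

/-- Away from the origin `Γ` vanishes to second order as `s → 0`; the powers of `s` absorb the
negative powers in `∂ᵥΓ`. -/
lemma kolK_off_diag {s x v : ℝ} (hs : 0 < s) (hs2 : s ≤ 2) (hxv : 1 / 2 ≤ |x| ∨ 1 / 2 ≤ |v|) :
    kolK (-s, x, v) ≤ 24 * 128 ^ 4 * s ^ 2 := by
  have hz : 1 / (128 * s) ≤ (v ^ 2 / s + x ^ 2 / s ^ 3) / 8 := by
    have e : (v ^ 2 / s + x ^ 2 / s ^ 3) / 8 = (16 * (v ^ 2 + x ^ 2 / s ^ 2)) / (128 * s) := by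
      field_simp
      ring
    rw [e]
    gcongr
    rcases hxv with h | h
    · have h1 : 1 / 4 ≤ x ^ 2 := by rw [← sq_abs]; nlinarith
      have h2 : 1 / 16 ≤ x ^ 2 / s ^ 2 := by
        rw [le_div_iff₀ (by positivity)]; nlinarith
      nlinarith [sq_nonneg v]
    · have h1 : 1 / 4 ≤ v ^ 2 := by rw [← sq_abs]; nlinarith
      have : 0 ≤ x ^ 2 / s ^ 2 := by positivity
      linarith
  have h1 : Real.exp (-((v ^ 2 / s + x ^ 2 / s ^ 3) / 8)) ≤ Real.exp (-(1 / (128 * s))) := by gcongr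
  have h2 := exp_neg_le_pow (z := 1 / (128 * s)) (by positivity) 4
  calc kolK (-s, x, v) ≤ (s ^ 2)⁻¹ * Real.exp (-((v ^ 2 / s + x ^ 2 / s ^ 3) / 8)) := kolK_le hs
    _ ≤ (s ^ 2)⁻¹ * ((Nat.factorial 4 : ℕ) / (1 / (128 * s)) ^ 4) := by
      gcongr; exact h1.trans h2
    _ = 24 * 128 ^ 4 * s ^ 2 := by
      norm_num [Nat.factorial]
      field_simp
      norm_num

lemma exists_cutoff : ∃ (b b1 b2 : ℝ → ℝ) (A : ℝ), ContDiff ℝ ((⊤ : ℕ∞) : WithTop ℕ∞) b ∧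
    (∀ x, HasDerivAt b (b1 x) x) ∧ (∀ x, HasDerivAt b1 (b2 x) x) ∧
    (∀ x, 0 ≤ b x) ∧ (∀ x, b x ≤ 1) ∧ (∀ x, |x| ≤ 1 / 2 → b x = 1) ∧ (∀ x, 1 ≤ |x| → b x = 0) ∧
    0 ≤ A ∧ (∀ x, |b1 x| ≤ A) ∧ (∀ x, |b2 x| ≤ A) ∧
    (∀ x, b1 x ≠ 0 → 1 / 2 ≤ |x| ∧ |x| ≤ 1) ∧ (∀ x, b2 x ≠ 0 → 1 / 2 ≤ |x| ∧ |x| ≤ 1) := by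
  set b : ℝ → ℝ := fun x => Real.smoothTransition ((1 - x ^ 2) * (4 / 3)) with hb
  have hsm : ContDiff ℝ ((⊤ : ℕ∞) : WithTop ℕ∞) b :=
    Real.smoothTransition.contDiff.comp (by fun_prop)
  have hone : ∀ x, |x| ≤ 1 / 2 → b x = 1 := fun x hx =>
    Real.smoothTransition.one_of_one_le (by rw [← sq_abs]; nlinarith [abs_nonneg x])
  have hzero : ∀ x, 1 ≤ |x| → b x = 0 := fun x hx =>
    Real.smoothTransition.zero_of_nonpos (by rw [← sq_abs]; nlinarith [abs_nonneg x])
  have hsm1 : ContDiff ℝ ((⊤ : ℕ∞) : WithTop ℕ∞) (deriv b) :=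
    (contDiff_infty_iff_deriv.1 hsm).2
  have hsm2 : ContDiff ℝ ((⊤ : ℕ∞) : WithTop ℕ∞) (deriv (deriv b)) :=
    (contDiff_infty_iff_deriv.1 hsm1).2
  -- `b` is locally constant off the shell `1/2 ≤ |x| ≤ 1`
  have hloc : ∀ x, ¬ (1 / 2 ≤ |x| ∧ |x| ≤ 1) → ∃ c, b =ᶠ[nhds x] fun _ => c := by
    intro x hx
    rw [not_and_or, not_le, not_le] at hx
    rcases hx with hx | hx
    · exact ⟨1, by
        filter_upwards [(isOpen_lt continuous_abs continuous_const).mem_nhds hx] with z hz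
        exact hone z (le_of_lt hz)⟩
    · exact ⟨0, by
        filter_upwards [(isOpen_lt continuous_const continuous_abs).mem_nhds hx] with z hz
        exact hzero z (le_of_lt hz)⟩
  have hd1 : ∀ x, deriv b x ≠ 0 → 1 / 2 ≤ |x| ∧ |x| ≤ 1 := by
    intro x hx
    by_contra hn
    obtain ⟨c, hc⟩ := hloc x hn
    exact hx (by rw [hc.deriv_eq]; simp)
  have hd2 : ∀ x, deriv (deriv b) x ≠ 0 → 1 / 2 ≤ |x| ∧ |x| ≤ 1 := by
    intro x hx
    by_contra hn
    obtain ⟨c, hc⟩ := hloc x hn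
    exact hx (by rw [hc.deriv.deriv_eq]; simp)
  obtain ⟨A1, hA1⟩ := (isCompact_Icc (a := (-1:ℝ)) (b := 1)).exists_bound_of_continuousOn
    hsm1.continuous.continuousOn
  obtain ⟨A2, hA2⟩ := (isCompact_Icc (a := (-1:ℝ)) (b := 1)).exists_bound_of_continuousOn
    hsm2.continuous.continuousOn
  have hA0 : 0 ≤ A1 := (norm_nonneg _).trans (hA1 0 (by simp))
  refine ⟨b, deriv b, deriv (deriv b), max A1 A2, hsm,
    fun x => (hsm.differentiable (by simp) x).hasDerivAt,
    fun x => (hsm1.differentiable (by simp) x).hasDerivAt,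
    fun x => Real.smoothTransition.nonneg _, fun x => Real.smoothTransition.le_one _,
    hone, hzero, hA0.trans (le_max_left _ _), fun x => ?_, fun x => ?_, hd1, hd2⟩
  · by_cases h : deriv b x = 0
    · rw [h, abs_zero]; exact hA0.trans (le_max_left _ _)
    · exact (hA1 x (abs_le.1 (hd1 x h).2)).trans (le_max_left _ _)
  · by_cases h : deriv (deriv b) x = 0
    · rw [h, abs_zero]; exact hA0.trans (le_max_left _ _)
    · exact (hA2 x (abs_le.1 (hd2 x h).2)).trans (le_max_right _ _)

/-- A smooth cutoff `b` on the line, equal to `1` for `|x| ≤ 1/2` and to `0` for `|x| ≥ 1`,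
with its first two derivatives `b1`, `b2`, a common bound `A` for them, and their supports. -/
structure Cutoff where
  b : ℝ → ℝ
  b1 : ℝ → ℝ
  b2 : ℝ → ℝ
  A : ℝ
  smooth : ContDiff ℝ ((⊤ : ℕ∞) : WithTop ℕ∞) b
  d1 : ∀ x, HasDerivAt b (b1 x) x
  d2 : ∀ x, HasDerivAt b1 (b2 x) x
  nonneg : ∀ x, 0 ≤ b x
  le_one : ∀ x, b x ≤ 1
  one : ∀ x, |x| ≤ 1 / 2 → b x = 1
  zero : ∀ x, 1 ≤ |x| → b x = 0
  A_nonneg : 0 ≤ A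
  b1_le : ∀ x, |b1 x| ≤ A
  b2_le : ∀ x, |b2 x| ≤ A
  b1_supp : ∀ x, b1 x ≠ 0 → 1 / 2 ≤ |x| ∧ |x| ≤ 1
  b2_supp : ∀ x, b2 x ≠ 0 → 1 / 2 ≤ |x| ∧ |x| ≤ 1

lemma Cutoff.exists : Nonempty Cutoff := by
  obtain ⟨b, b1, b2, A, h1, h2, h3, h4, h5, h6, h7, h8, h9, h10, h11, h12⟩ := exists_cutoff
  exact ⟨⟨b, b1, b2, A, h1, h2, h3, h4, h5, h6, h7, h8, h9, h10, h11, h12⟩⟩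

/-- The derivative `∂ᵥΓ` of the kernel `kolK`. -/
def kolKv (p : ℝ × ℝ × ℝ) : ℝ := (2 * p.2.2 / p.1 - 3 * p.2.1 / p.1 ^ 2) * kolK p

/-- The function `(∂ₜ + v ∂ₓ + ∂ᵥᵥ)(b(x) b(v) Γ)`; as `Γ` solves the equation, only terms with a
derivative of the cutoff remain. -/
def cutErr (c : Cutoff) (p : ℝ × ℝ × ℝ) : ℝ :=
  p.2.2 * (c.b1 p.2.1 * c.b p.2.2 * kolK p) + c.b p.2.1 * (c.b2 p.2.2 * kolK p
    + 2 * c.b1 p.2.2 * kolKv p)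

lemma cutErr_eq_zero (c : Cutoff) {t x v : ℝ} (h : ¬ (|x| ≤ 1 ∧ |v| ≤ 1)) :
    cutErr c (t, x, v) = 0 := by
  rw [not_and_or, not_le, not_le] at h
  unfold cutErr
  rcases h with h | h
  · have h1 : c.b1 x = 0 := by
      by_contra hn; linarith [(c.b1_supp x hn).2]
    simp [h1, c.zero x h.le]
  · have h1 : c.b1 v = 0 := by
      by_contra hn; linarith [(c.b1_supp v hn).2]
    have h2 : c.b2 v = 0 := by
      by_contra hn; linarith [(c.b2_supp v hn).2]
    simp [h1, h2, c.zero v h.le]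

lemma cutErr_le (c : Cutoff) {s x v : ℝ} (hs : 0 < s) (hs2 : s ≤ 2) :
    cutErr c (-s, x, v) ≤ 22 * (24 * 128 ^ 4) * c.A := by
  have hA := c.A_nonneg
  by_cases hin : |x| ≤ 1 ∧ |v| ≤ 1
  swap
  · rw [cutErr_eq_zero c hin]; positivity
  obtain ⟨hx, hv⟩ := hin
  by_cases hoff : 1 / 2 ≤ |x| ∨ 1 / 2 ≤ |v|
  swap
  · rw [not_or, not_le, not_le] at hoff
    have h1 : c.b1 x = 0 := by
      by_contra hn; linarith [(c.b1_supp x hn).1]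
    have h2 : c.b1 v = 0 := by
      by_contra hn; linarith [(c.b1_supp v hn).1]
    have h3 : c.b2 v = 0 := by
      by_contra hn; linarith [(c.b2_supp v hn).1]
    simp only [cutErr, h1, h2, h3]
    simp
    positivity
  have hk := kolK_off_diag hs hs2 hoff
  have hk0 : 0 < kolK (-s, x, v) := kolK_pos (by linarith)
  set N : ℝ := 24 * 128 ^ 4 with hN
  have hN0 : 0 < N := by positivity
  have hk4 : kolK (-s, x, v) ≤ 4 * N := by
    have : s ^ 2 ≤ 4 := by nlinarith
    nlinarith
  have hkv : |kolKv (-s, x, v)| ≤ 7 * N := by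
    have e : kolKv (-s, x, v) = -(2 * v * s + 3 * x) * (kolK (-s, x, v) / s ^ 2) := by
      unfold kolKv; field_simp; ring
    rw [e, abs_mul, abs_neg]
    have h1 : |2 * v * s + 3 * x| ≤ 7 := by
      calc |2 * v * s + 3 * x| ≤ |2 * v * s| + |3 * x| := abs_add_le _ _
        _ = 2 * |v| * s + 3 * |x| := by simp [abs_mul, abs_of_pos hs]
        _ ≤ 2 * 1 * 2 + 3 * 1 := by gcongr
        _ = 7 := by norm_num
    have h2 : |kolK (-s, x, v) / s ^ 2| ≤ N := by
      rw [abs_of_nonneg (by positivity), div_le_iff₀ (by positivity)]; exact hk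
    gcongr
  have hb : ∀ z, |c.b z| ≤ 1 := fun z => by rw [abs_of_nonneg (c.nonneg z)]; exact c.le_one z
  have hk4' : |kolK (-s, x, v)| ≤ 4 * N := by rwa [abs_of_pos hk0]
  refine (le_abs_self _).trans ?_
  unfold cutErr
  calc _ ≤ |v| * (|c.b1 x| * |c.b v| * |kolK (-s, x, v)|) + |c.b x| * (|c.b2 v| * |kolK (-s, x, v)|
        + 2 * |c.b1 v| * |kolKv (-s, x, v)|) := by
        refine (abs_add_le _ _).trans ?_
        rw [abs_mul, abs_mul, abs_mul, abs_mul (c.b x)]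
        gcongr
        refine (abs_add_le _ _).trans ?_
        rw [abs_mul, abs_mul, abs_mul]
        simp
    _ ≤ 1 * (c.A * 1 * (4 * N)) + 1 * (c.A * (4 * N) + 2 * c.A * (7 * N)) := by
        have h1 := c.b1_le x
        have h2 := c.b1_le v
        have h3 := c.b2_le v
        have h4 := hb x
        have h5 := hb v
        gcongr
    _ = 22 * N * c.A := by ring

/-- The compactly supported subsolution `F(Γ + η(t - 1))`. -/
def subTest (η : ℝ) (p : ℝ × ℝ × ℝ) : ℝ := convF (kolK p + η * (p.1 - 1))

/-- The truncated kernel `b(x) b(v) Γ`. -/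
def cutTest (c : Cutoff) (p : ℝ × ℝ × ℝ) : ℝ := c.b p.2.1 * c.b p.2.2 * kolK p

lemma subTest_contDiffAt (η : ℝ) {t x v : ℝ} (ht : t < 0) :
    ContDiffAt ℝ ((⊤ : ℕ∞) : WithTop ℕ∞) (subTest η) (t, x, v) := by
  refine ContDiffAt.comp (t, x, v) (g := convF) convF_contDiff.contDiffAt ?_
  have : ContDiffAt ℝ ((⊤ : ℕ∞) : WithTop ℕ∞) kolK (t, x, v) := kolK_contDiffAt ht
  fun_prop

lemma cutTest_contDiffAt (c : Cutoff) {t x v : ℝ} (ht : t < 0) :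
    ContDiffAt ℝ ((⊤ : ℕ∞) : WithTop ℕ∞) (cutTest c) (t, x, v) := by
  have h1 : ContDiffAt ℝ ((⊤ : ℕ∞) : WithTop ℕ∞) kolK (t, x, v) := kolK_contDiffAt ht
  have h2 := c.smooth
  unfold cutTest
  fun_prop

/-- `ψ` is smooth on `{t < T}`, where `ψt`, `ψx`, `ψv`, `ψvv` are its partial derivatives
`∂ₜψ`, `∂ₓψ`, `∂ᵥψ`, `∂ᵥᵥψ`. -/
structure KinDeriv (ψ : ℝ × ℝ × ℝ → ℝ) (T : ℝ) (ψt ψx ψv ψvv : ℝ × ℝ × ℝ → ℝ) : Prop where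
  smooth : ∀ t < T, ∀ x v, ContDiffAt ℝ ((⊤ : ℕ∞) : WithTop ℕ∞) ψ (t, x, v)
  dt : ∀ t < T, ∀ x v, HasDerivAt (fun τ => ψ (τ, x, v)) (ψt (t, x, v)) t
  dx : ∀ t < T, ∀ x v, HasDerivAt (fun ξ => ψ (t, ξ, v)) (ψx (t, x, v)) x
  dv : ∀ t < T, ∀ x v, HasDerivAt (fun ν => ψ (t, x, ν)) (ψv (t, x, v)) v
  dvv : ∀ t < T, ∀ x v, HasDerivAt (fun ν => ψv (t, x, ν)) (ψvv (t, x, v)) v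

/-- The chain rule gives `L(F(G)) = F'(G) LG + F''(G) (∂ᵥG)²` for `L = ∂ₜ + v ∂ₓ + ∂ᵥᵥ`, applied
to `G = Γ + η(t - 1)` with `LG = η`. -/
lemma subTest_kin (η : ℝ) : ∃ ψt ψx ψv ψvv, KinDeriv (subTest η) 0 ψt ψx ψv ψvv ∧
    ∀ t < 0, ∀ x v, ψt (t, x, v) + v * ψx (t, x, v) + ψvv (t, x, v)
      = η * convF1 (kolK (t, x, v) + η * (t - 1))
        + convF2 (kolK (t, x, v) + η * (t - 1)) * kolKv (t, x, v) ^ 2 := by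
  refine ⟨fun p => convF1 (kolK p + η * (p.1 - 1)) *
      ((-2 / p.1 - p.2.2 ^ 2 / p.1 ^ 2 + 6 * p.2.1 * p.2.2 / p.1 ^ 3 - 9 * p.2.1 ^ 2 / p.1 ^ 4)
        * kolK p + η),
    fun p => convF1 (kolK p + η * (p.1 - 1)) *
      ((-3 * p.2.2 / p.1 ^ 2 + 6 * p.2.1 / p.1 ^ 3) * kolK p),
    fun p => convF1 (kolK p + η * (p.1 - 1)) * kolKv p,
    fun p => convF2 (kolK p + η * (p.1 - 1)) * kolKv p ^ 2 + convF1 (kolK p + η * (p.1 - 1)) *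
      ((2 / p.1 + (2 * p.2.2 / p.1 - 3 * p.2.1 / p.1 ^ 2) ^ 2) * kolK p),
    ⟨fun t ht x v => subTest_contDiffAt η ht, ?_, ?_, ?_, ?_⟩, ?_⟩
  · intro t ht x v
    refine ((convF_hasDerivAt _).comp t ((kolK_t ht).add
      (((hasDerivAt_id t).sub_const 1).const_mul η))).congr_deriv ?_
    simp
  · intro t ht x v
    exact (convF_hasDerivAt _).comp x ((kolK_x ht).add_const (η * (t - 1)))
  · intro t ht x v
    exact (convF_hasDerivAt _).comp v ((kolK_v ht).add_const (η * (t - 1)))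
  · intro t ht x v
    refine (((convF1_hasDerivAt _).comp v ((kolK_v ht).add_const (η * (t - 1)))).mul
      (kolK_vv ht)).congr_deriv ?_
    simp only [kolKv, Function.comp]
    ring
  · intro t ht x v
    have := kolK_eq (x := x) (v := v) ht
    simp only
    linear_combination convF1 (kolK (t, x, v) + η * (t - 1)) * this

lemma cutTest_kin (c : Cutoff) : ∃ ψt ψx ψv ψvv, KinDeriv (cutTest c) 0 ψt ψx ψv ψvv ∧
    ∀ t < 0, ∀ x v, ψt (t, x, v) + v * ψx (t, x, v) + ψvv (t, x, v) = cutErr c (t, x, v) := by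
  refine ⟨fun p => c.b p.2.1 * c.b p.2.2 *
      ((-2 / p.1 - p.2.2 ^ 2 / p.1 ^ 2 + 6 * p.2.1 * p.2.2 / p.1 ^ 3 - 9 * p.2.1 ^ 2 / p.1 ^ 4)
        * kolK p),
    fun p => c.b1 p.2.1 * c.b p.2.2 * kolK p + c.b p.2.1 * c.b p.2.2 *
      ((-3 * p.2.2 / p.1 ^ 2 + 6 * p.2.1 / p.1 ^ 3) * kolK p),
    fun p => c.b p.2.1 * (c.b1 p.2.2 * kolK p + c.b p.2.2 * kolKv p),
    fun p => c.b p.2.1 * (c.b2 p.2.2 * kolK p + 2 * c.b1 p.2.2 * kolKv p + c.b p.2.2 *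
      ((2 / p.1 + (2 * p.2.2 / p.1 - 3 * p.2.1 / p.1 ^ 2) ^ 2) * kolK p)),
    ⟨fun t ht x v => cutTest_contDiffAt c ht, ?_, ?_, ?_, ?_⟩, ?_⟩
  · intro t ht x v
    exact (kolK_t (x := x) (v := v) ht).const_mul (c.b x * c.b v)
  · intro t ht x v
    exact ((c.d1 x).mul_const (c.b v)).mul (kolK_x ht)
  · intro t ht x v
    refine (((c.d1 v).const_mul (c.b x)).mul (kolK_v ht)).congr_deriv ?_
    simp only [kolKv]
    ring
  · intro t ht x v
    refine ((((c.d2 v).mul (kolK_v ht)).add ((c.d1 v).mul (kolK_vv ht))).const_mul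
      (c.b x)).congr_deriv ?_
    simp only [kolKv]
    ring
  · intro t ht x v
    have := kolK_eq (x := x) (v := v) ht
    simp only [cutErr]
    linear_combination c.b x * c.b v * this

lemma KinDeriv.shift {ψ ψt ψx ψv ψvv : ℝ × ℝ × ℝ → ℝ} {T : ℝ}
    (h : KinDeriv ψ T ψt ψx ψv ψvv) (τ δ : ℝ) :
    KinDeriv (fun p => ψ (p.1 + τ, p.2.1 - δ, p.2.2)) (T - τ)
      (fun p => ψt (p.1 + τ, p.2.1 - δ, p.2.2)) (fun p => ψx (p.1 + τ, p.2.1 - δ, p.2.2))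
      (fun p => ψv (p.1 + τ, p.2.1 - δ, p.2.2)) (fun p => ψvv (p.1 + τ, p.2.1 - δ, p.2.2)) where
  smooth t ht x v := ContDiffAt.comp (t, x, v)
    (f := fun p : ℝ × ℝ × ℝ => (p.1 + τ, p.2.1 - δ, p.2.2))
    (h.smooth (t + τ) (by linarith) (x - δ) v) (by fun_prop)
  dt t ht x v := (h.dt (t + τ) (by linarith) (x - δ) v).comp_add_const t τ
  dx t ht x v := (h.dx (t + τ) (by linarith) (x - δ) v).comp_sub_const x δ
  dv t ht x v := h.dv (t + τ) (by linarith) (x - δ) v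
  dvv t ht x v := h.dvv (t + τ) (by linarith) (x - δ) v

lemma KinDeriv.combine {ψ ψt ψx ψv ψvv φ φt φx φv φvv : ℝ × ℝ × ℝ → ℝ} {T S : ℝ}
    (h : KinDeriv ψ T ψt ψx ψv ψvv) (g : KinDeriv φ S φt φx φv φvv) (hST : S ≤ T) (k : ℝ) :
    KinDeriv (fun p => k * ψ p - φ p) S (fun p => k * ψt p - φt p) (fun p => k * ψx p - φx p)
      (fun p => k * ψv p - φv p) (fun p => k * ψvv p - φvv p) where
  smooth t ht x v := (contDiffAt_const.mul (h.smooth t (by linarith) x v)).sub (g.smooth t ht x v)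
  dt t ht x v := ((h.dt t (by linarith) x v).const_mul k).sub (g.dt t ht x v)
  dx t ht x v := ((h.dx t (by linarith) x v).const_mul k).sub (g.dx t ht x v)
  dv t ht x v := ((h.dv t (by linarith) x v).const_mul k).sub (g.dv t ht x v)
  dvv t ht x v := ((h.dvv t (by linarith) x v).const_mul k).sub (g.dvv t ht x v)

/-! ### Limits of the pairings at the concentration times -/

lemma KinDeriv.continuous_slice {ψ ψt ψx ψv ψvv : ℝ × ℝ × ℝ → ℝ} {T : ℝ}
    (h : KinDeriv ψ T ψt ψx ψv ψvv) (y w r : ℝ) {t : ℝ} (ht : t < T) :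
    Continuous (fun P => ψ (kinCoord y w r t P)) := by
  rw [continuous_iff_continuousAt]
  intro P
  have : ContinuousAt (kinCoord y w r t) P := by
    unfold kinCoord; fun_prop
  exact ContinuousAt.comp (f := kinCoord y w r t) (h.smooth t ht _ _).continuousAt this

/-- The Gaussian majorant of `Γ` from `kolK_le`, in kinetic coordinates, has total mass
independent of the time `s`. -/
lemma gauss_mass {r s : ℝ} (hr : 0 < r) (hs : 0 < s) (m w : ℝ) :
    Integrable (fun P : P2 => (s ^ 2)⁻¹ * (Real.exp (-(1 / (8 * s ^ 3 * r ^ 6)) * (P.1 - m) ^ 2)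
      * Real.exp (-(1 / (8 * s * r ^ 2)) * (P.2 - w) ^ 2))) ∧
    ∫ P : P2, (s ^ 2)⁻¹ * (Real.exp (-(1 / (8 * s ^ 3 * r ^ 6)) * (P.1 - m) ^ 2)
      * Real.exp (-(1 / (8 * s * r ^ 2)) * (P.2 - w) ^ 2)) = 8 * Real.pi * r ^ 4 := by
  have i1 : Integrable (fun X : ℝ => Real.exp (-(1 / (8 * s ^ 3 * r ^ 6)) * (X - m) ^ 2)) :=
    (integrable_exp_neg_mul_sq (b := 1 / (8 * s ^ 3 * r ^ 6)) (by positivity)).comp_sub_right m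
  have i2 : Integrable (fun V : ℝ => Real.exp (-(1 / (8 * s * r ^ 2)) * (V - w) ^ 2)) :=
    (integrable_exp_neg_mul_sq (b := 1 / (8 * s * r ^ 2)) (by positivity)).comp_sub_right w
  refine ⟨(i1.mul_prod i2).const_mul _, ?_⟩
  rw [integral_const_mul, Measure.volume_eq_prod,
    integral_prod_mul (fun X : ℝ => Real.exp (-(1 / (8 * s ^ 3 * r ^ 6)) * (X - m) ^ 2))
      (fun V : ℝ => Real.exp (-(1 / (8 * s * r ^ 2)) * (V - w) ^ 2)),
    integral_sub_right_eq_self (fun X : ℝ => Real.exp (-(1 / (8 * s ^ 3 * r ^ 6)) * X ^ 2)) m,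
    integral_sub_right_eq_self (fun X : ℝ => Real.exp (-(1 / (8 * s * r ^ 2)) * X ^ 2)) w,
    integral_gaussian, integral_gaussian, ← Real.sqrt_mul (by positivity)]
  have : Real.pi / (1 / (8 * s ^ 3 * r ^ 6)) * (Real.pi / (1 / (8 * s * r ^ 2)))
      = (8 * Real.pi * s ^ 2 * r ^ 4) ^ 2 := by
    field_simp
  rw [this, Real.sqrt_sq (by positivity)]
  field_simp

/-- The part with `-3 ≤ t ≤ b` of the cone `|x| ≤ M (-t)`, `|v| ≤ M`, mapped back to phase space. -/
lemma region_compact (y w r M b : ℝ) :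
    IsCompact ((fun p : ℝ × ℝ × ℝ => ((y + r ^ 2 * w * p.1 + r ^ 3 * p.2.1, w + r * p.2.2) : P2)) ''
      {p | p.1 ∈ Icc (-3) b ∧ |p.2.1| ≤ M * -p.1 ∧ |p.2.2| ≤ M}) := by
  refine IsCompact.image ?_ (by fun_prop)
  refine (isCompact_Icc (a := (-3:ℝ)) (b := b)).prod ((isCompact_Icc (a := -(|M| * 3))
    (b := |M| * 3)).prod (isCompact_Icc (a := -M) (b := M))) |>.of_isClosed_subset ?_ ?_
  · refine IsClosed.inter (isClosed_Icc.preimage continuous_fst) (IsClosed.inter ?_ ?_)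
    · exact isClosed_le (f := fun p : ℝ × ℝ × ℝ => |p.2.1|) (by fun_prop) (by fun_prop)
    · exact isClosed_le (f := fun p : ℝ × ℝ × ℝ => |p.2.2|) (by fun_prop) (by fun_prop)
  · rintro ⟨t, x, v⟩ ⟨h1, h2, h3⟩
    refine ⟨h1, abs_le.1 (h2.trans ?_), abs_le.1 h3⟩
    have hm : 0 ≤ M := (abs_nonneg v).trans h3
    rw [abs_of_nonneg hm]
    have := h1.1
    simp only at this ⊢
    nlinarith

lemma mem_region {y w r M b t : ℝ} {P : P2} (hr : 0 < r) (ht : t ∈ Icc (-3) b)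
    (hx : |(kinCoord y w r t P).2.1| ≤ M * -t) (hv : |(kinCoord y w r t P).2.2| ≤ M) :
    P ∈ ((fun p : ℝ × ℝ × ℝ => ((y + r ^ 2 * w * p.1 + r ^ 3 * p.2.1, w + r * p.2.2) : P2)) ''
      {p | p.1 ∈ Icc (-3) b ∧ |p.2.1| ≤ M * -p.1 ∧ |p.2.2| ≤ M}) := by
  refine ⟨kinCoord y w r t P, ⟨ht, hx, hv⟩, ?_⟩
  have : r ≠ 0 := hr.ne'
  ext
  · simp only [kinCoord]; field_simp; ring
  · simp only [kinCoord]; field_simp; ring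

/-- Near `t = 0` the pairing with `subTest η` is at most `8πr⁴` times `h(y, w)`, up to `ε`. Only
continuity of `h` at `(y, w)` within `Q` is used, so `(y, w)` may be a boundary point. -/
lemma sub_pairing_limit {Q : Set P2} {h : P2 → ℝ} {y w r η M : ℝ} (hQ : IsOpen Q)
    (hr : 0 < r) (hη : 0 < η) (hlev : ∀ s x v : ℝ, 0 < s → s ≤ 3 →
      η ≤ kolK (-s, x, v) → |x| ≤ M * s ∧ |v| ≤ M ∧ v ^ 6 ≤ M * s)
    (h_int : ∀ t ∈ Ioo (-3:ℝ) 0, IntegrableOn (fun P => h P * subTest η (kinCoord y w r t P)) Q)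
    (hcq : ContinuousWithinAt h Q (y, w)) (hq : 0 ≤ h (y, w)) {ε : ℝ} (hε : 0 < ε) :
    ∃ t ∈ Ioo (-1:ℝ) 0, ∫ P in Q, h P * subTest η (kinCoord y w r t P)
      ≤ (h (y, w) + ε) * (8 * Real.pi * r ^ 4) := by
  have hr0 : r ≠ 0 := ne_of_gt hr
  obtain ⟨ρ, hρ, hball⟩ := Metric.continuousWithinAt_iff.1 hcq ε hε
  have ev1 : ∀ᶠ s in nhdsWithin (0:ℝ) (Ioi 0), (r ^ 2 * |w| + r ^ 3 * M) * s < ρ := by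
    refine nhdsWithin_le_nhds ((isOpen_lt (by fun_prop) continuous_const).mem_nhds ?_)
    simpa using hρ
  have ev2 : ∀ᶠ s in nhdsWithin (0:ℝ) (Ioi 0), M * s < (ρ / r) ^ 6 := by
    refine nhdsWithin_le_nhds ((isOpen_lt (by fun_prop) continuous_const).mem_nhds ?_)
    simp; positivity
  have ev3 : ∀ᶠ s in nhdsWithin (0:ℝ) (Ioi 0), s < 1 :=
    nhdsWithin_le_nhds (gt_mem_nhds one_pos)
  obtain ⟨s, h1, h2, h3, hs⟩ := (ev1.and (ev2.and (ev3.and self_mem_nhdsWithin))).exists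
  refine ⟨-s, ⟨by linarith, by linarith⟩, ?_⟩
  obtain ⟨gi, gm⟩ := gauss_mass hr hs (y - r ^ 2 * w * s) w
  set G : P2 → ℝ := fun P => (s ^ 2)⁻¹ * (Real.exp (-(1 / (8 * s ^ 3 * r ^ 6)) *
    (P.1 - (y - r ^ 2 * w * s)) ^ 2) * Real.exp (-(1 / (8 * s * r ^ 2)) * (P.2 - w) ^ 2)) with hG
  have hG0 : ∀ P, 0 ≤ G P := fun P => by positivity
  have hqe : 0 ≤ h (y, w) + ε := by linarith
  rw [← gm, ← integral_const_mul]
  refine le_trans ?_ (setIntegral_le_integral (s := Q) (gi.const_mul _)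
    (Eventually.of_forall fun P => mul_nonneg hqe (hG0 P)))
  refine setIntegral_mono_on (h_int (-s) ⟨by linarith, by linarith⟩)
    (gi.const_mul _).integrableOn hQ.measurableSet fun P hP => ?_
  set x : ℝ := (P.1 - y - r ^ 2 * w * (-s)) / r ^ 3 with hx
  set v : ℝ := (P.2 - w) / r with hv
  have hPx : P.1 - y = -(r ^ 2 * w * s) + r ^ 3 * x := by rw [hx]; field_simp; ring
  have hPv : P.2 - w = r * v := by rw [hv]; field_simp
  have hcoord : kinCoord y w r (-s) P = (-s, x, v) := rfl
  rw [hcoord]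
  by_cases hz : subTest η (-s, x, v) = 0
  · rw [hz, mul_zero]; exact mul_nonneg hqe (hG0 P)
  have hk : η ≤ kolK (-s, x, v) := by
    have := convF_pos_arg hz
    simp only at this
    nlinarith
  obtain ⟨l1, l2, l3⟩ := hlev s x v hs (by linarith) hk
  have hd : dist P (y, w) < ρ := by
    rw [Prod.dist_eq, max_lt_iff, Real.dist_eq, Real.dist_eq, hPx, hPv]
    constructor
    · calc |-(r ^ 2 * w * s) + r ^ 3 * x| ≤ |-(r ^ 2 * w * s)| + |r ^ 3 * x| := abs_add_le _ _
        _ = r ^ 2 * |w| * s + r ^ 3 * |x| := by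
          rw [abs_neg, abs_mul, abs_mul, abs_mul, abs_of_pos hs, abs_of_pos (pow_pos hr 2),
            abs_of_pos (pow_pos hr 3)]
        _ ≤ r ^ 2 * |w| * s + r ^ 3 * (M * s) := by gcongr
        _ < ρ := by linarith
    · rw [abs_mul, abs_of_pos hr, mul_comm, ← lt_div_iff₀ hr]
      refine lt_of_pow_lt_pow_left₀ 6 (by positivity) ?_
      rw [Even.pow_abs (by decide)]
      linarith
  have hhP : h P ≤ h (y, w) + ε := by
    have := hball hP hd
    rw [Real.dist_eq, abs_lt] at this
    linarith
  have hψ : subTest η (-s, x, v) ≤ G P := by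
    refine (convF_le (kolK_pos (by linarith)).le (by simp only; nlinarith)).trans
      ((kolK_le hs).trans_eq ?_)
    rw [hG]
    simp only
    rw [← Real.exp_add, show P.1 - (y - r ^ 2 * w * s) = r ^ 3 * x by linarith, hPv]
    congr 2
    field_simp
    ring
  exact mul_le_mul hhP hψ (convF_nonneg _) hqe

/-- Near `t = -1` the pairing with the shifted truncated kernel is at least `4e⁻⁷r⁴` times
`h(y - r²w + r³δ, w)`, up to `ε`: integrate over the kinetic box of `kolK_lower'`. -/
lemma cut_pairing_limit {Q : Set P2} {h : P2 → ℝ} {y w r δ : ℝ} (c : Cutoff) (hQ : IsOpen Q)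
    (hc : ContinuousOn h Q) (hpos : ∀ p ∈ Q, 0 ≤ h p) (hr : 0 < r)
    (hpQ : (y - r ^ 2 * w + r ^ 3 * δ, w) ∈ Q)
    (h_int : ∀ t ∈ Ioo (-3:ℝ) (-1), IntegrableOn (fun P => h P * cutTest c
      ((kinCoord y w r t P).1 + 1, (kinCoord y w r t P).2.1 - δ, (kinCoord y w r t P).2.2)) Q)
    {ε : ℝ} (hε : 0 < ε) :
    ∃ t ∈ Ioo (-2:ℝ) (-1), (h (y - r ^ 2 * w + r ^ 3 * δ, w) - ε) * (4 * Real.exp (-7) * r ^ 4)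
      ≤ ∫ P in Q, h P * cutTest c
        ((kinCoord y w r t P).1 + 1, (kinCoord y w r t P).2.1 - δ, (kinCoord y w r t P).2.2) := by
  have hr0 : r ≠ 0 := ne_of_gt hr
  set z : ℝ := y - r ^ 2 * w + r ^ 3 * δ with hz
  have hnn : ∀ t ∈ Ioo (-2:ℝ) (-1), ∀ P ∈ Q, 0 ≤ h P * cutTest c
      ((kinCoord y w r t P).1 + 1, (kinCoord y w r t P).2.1 - δ, (kinCoord y w r t P).2.2) := by
    intro t ht P hP
    refine mul_nonneg (hpos P hP) (mul_nonneg (mul_nonneg (c.nonneg _) (c.nonneg _)) ?_)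
    exact (kolK_pos (by have := ht.2; simp only [kinCoord]; linarith)).le
  by_cases hneg : h (z, w) - ε ≤ 0
  · refine ⟨-3 / 2, by norm_num, ?_⟩
    refine (mul_nonpos_of_nonpos_of_nonneg hneg (by positivity)).trans ?_
    exact setIntegral_nonneg hQ.measurableSet (hnn _ (by norm_num))
  rw [not_le] at hneg
  have hev : ∀ᶠ P in nhds ((z, w) : P2), P ∈ Q ∧ h (z, w) - ε < h P :=
    Filter.Eventually.and (hQ.mem_nhds hpQ) ((hc.continuousAt (hQ.mem_nhds hpQ)).eventually
      (lt_mem_nhds (by linarith)))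
  obtain ⟨ρ, hρ, hball⟩ := Metric.eventually_nhds_iff.1 hev
  have ev1 : ∀ᶠ σ in nhdsWithin (0:ℝ) (Ioi 0), r ^ 2 * |w| * σ ^ 2 + r ^ 3 * σ ^ 3 < ρ := by
    refine nhdsWithin_le_nhds ((isOpen_lt (by fun_prop) continuous_const).mem_nhds ?_)
    simpa using hρ
  have ev2 : ∀ᶠ σ in nhdsWithin (0:ℝ) (Ioi 0), r * σ < ρ := by
    refine nhdsWithin_le_nhds ((isOpen_lt (by fun_prop) continuous_const).mem_nhds ?_)
    simpa using hρ
  have ev3 : ∀ᶠ σ in nhdsWithin (0:ℝ) (Ioi 0), σ < 1 / 2 :=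
    nhdsWithin_le_nhds (gt_mem_nhds (by norm_num))
  obtain ⟨σ, h1, h2, h3, hs⟩ := (ev1.and (ev2.and (ev3.and self_mem_nhdsWithin))).exists
  have htI : -1 - σ ^ 2 ∈ Ioo (-2:ℝ) (-1) := ⟨by nlinarith, by nlinarith⟩
  refine ⟨-1 - σ ^ 2, htI, ?_⟩
  set S : Set P2 := Icc (z - r ^ 2 * w * σ ^ 2 - r ^ 3 * σ ^ 3)
    (z - r ^ 2 * w * σ ^ 2 + r ^ 3 * σ ^ 3) ×ˢ
      Icc (w - r * σ) (w + r * σ) with hS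
  have hmem : ∀ P ∈ S, |P.1 - z + r ^ 2 * w * σ ^ 2| ≤ r ^ 3 * σ ^ 3 ∧ |P.2 - w| ≤ r * σ := by
    rintro P ⟨⟨a1, a2⟩, a3, a4⟩
    rw [abs_le, abs_le]
    exact ⟨⟨by linarith, by linarith⟩, by linarith, by linarith⟩
  have hSball : ∀ P ∈ S, P ∈ Q ∧ h (z, w) - ε < h P := by
    intro P hP
    obtain ⟨a, b⟩ := hmem P hP
    refine hball ?_
    rw [Prod.dist_eq, max_lt_iff, Real.dist_eq, Real.dist_eq]
    refine ⟨?_, b.trans_lt h2⟩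
    calc |P.1 - z| = |(P.1 - z + r ^ 2 * w * σ ^ 2) - r ^ 2 * w * σ ^ 2| := by congr 1; ring
      _ ≤ |P.1 - z + r ^ 2 * w * σ ^ 2| + |r ^ 2 * w * σ ^ 2| := abs_sub _ _
      _ ≤ r ^ 3 * σ ^ 3 + r ^ 2 * |w| * σ ^ 2 := by
        rw [abs_mul (r ^ 2 * w), abs_mul (r ^ 2), abs_of_pos (pow_pos hr 2),
          abs_of_pos (pow_pos hs 2)]
        gcongr
      _ < ρ := by linarith
  have hSQ : S ⊆ Q := fun P hP => (hSball P hP).1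
  have hSm : MeasurableSet S := measurableSet_Icc.prod measurableSet_Icc
  have hvol : volume.real S = 4 * r ^ 4 * σ ^ 4 := by
    rw [hS, Measure.real, Measure.volume_eq_prod, Measure.prod_prod, Real.volume_Icc,
      Real.volume_Icc, ENNReal.toReal_mul, ENNReal.toReal_ofReal, ENNReal.toReal_ofReal]
    · ring
    · have : 0 < r * σ := by positivity
      linarith
    · have : 0 < r ^ 3 * σ ^ 3 := by positivity
      linarith
  have hvfin : volume S ≠ ⊤ := by
    rw [hS]; exact (isCompact_Icc.prod isCompact_Icc).measure_ne_top
  have hI := h_int (-1 - σ ^ 2) ⟨by linarith [htI.1], htI.2⟩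
  refine le_trans ?_ (setIntegral_mono_set hI
    ((ae_restrict_mem hQ.measurableSet).mono fun P hP => hnn _ htI P hP)
    (Eventually.of_forall hSQ))
  have hconst : (h (z, w) - ε) * (4 * Real.exp (-7) * r ^ 4)
      = ∫ P in S, (h (z, w) - ε) * (Real.exp (-7) * (σ ^ 4)⁻¹) := by
    rw [setIntegral_const, hvol, smul_eq_mul]
    field_simp
  rw [hconst]
  refine setIntegral_mono_on (integrableOn_const hvfin) (hI.mono_set hSQ) hSm fun P hP => ?_
  obtain ⟨a, b⟩ := hmem P hP
  set x : ℝ := (P.1 - z + r ^ 2 * w * σ ^ 2) / r ^ 3 with hx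
  set v : ℝ := (P.2 - w) / r with hv
  have hcoord : ((kinCoord y w r (-1 - σ ^ 2) P).1 + 1,
      (kinCoord y w r (-1 - σ ^ 2) P).2.1 - δ, (kinCoord y w r (-1 - σ ^ 2) P).2.2)
      = (-σ ^ 2, x, v) := by
    simp only [kinCoord, hx, hv, hz, Prod.mk.injEq, and_true]
    refine ⟨by ring, ?_⟩
    field_simp
    ring
  rw [hcoord]
  have hxs : |x| ≤ σ ^ 3 := by
    rw [hx, abs_div, abs_of_pos (pow_pos hr 3), div_le_iff₀ (by positivity)]; linarith
  have hvs : |v| ≤ σ := by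
    rw [hv, abs_div, abs_of_pos hr, div_le_iff₀ hr]; linarith
  have hs3 : σ ^ 3 ≤ 1 / 2 := by nlinarith [pow_pos hs 2, pow_pos hs 3]
  have hψ : Real.exp (-7) * (σ ^ 4)⁻¹ ≤ cutTest c (-σ ^ 2, x, v) := by
    simp only [cutTest, c.one x (hxs.trans hs3), c.one v (hvs.trans h3.le), one_mul]
    exact kolK_lower' hs hxs hvs
  exact mul_le_mul (hSball P hP).2.le hψ (by positivity) (hpos P (hSQ hP))

/-! ### One Harnack step -/

/-- One-sided Harnack inequality with universal constants: the value of `h` at `(y, w)` controls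
its value at `(y - r²w + r³δ, w)`, provided the cone issuing from `(y, w)` stays in `Q`. The vertex
`(y, w)` itself need not belong to `Q`. -/
lemma harnack_step : ∃ M C : ℝ, 3 ≤ M ∧ 1 ≤ C ∧ ∀ (Q : Set P2) (h hv : P2 → ℝ), IsOpen Q →
    IsWeakSolOpen Q h hv → ContinuousOn h Q → (∀ p ∈ Q, 0 ≤ h p) →
    ∀ y w r δ : ℝ, 0 < r → |δ| ≤ 1 →
      (∀ s x v : ℝ, 0 < s → s ≤ 3 → |x| ≤ M * s → |v| ≤ M →
        ((y - r ^ 2 * w * s + r ^ 3 * x, w + r * v) : P2) ∈ Q) →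
      ContinuousWithinAt h Q (y, w) → 0 ≤ h (y, w) →
      h (y - r ^ 2 * w + r ^ 3 * δ, w) ≤ C * h (y, w) := by
  obtain ⟨c⟩ := Cutoff.exists
  -- `kolK_lower` gives `Γ ≥ 5η`, and `η (t - 1) ≥ -4η` for `t ≥ -3`, which leaves `η` to spare
  set η : ℝ := Real.exp (-19) / 45 with hη'
  have hη : 0 < η := by positivity
  obtain ⟨M, hM, hlev⟩ := kolK_level hη
  set B : ℝ := 22 * (24 * 128 ^ 4) * c.A with hB
  have hB0 : 0 ≤ B := mul_nonneg (by norm_num) c.A_nonneg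
  set e : ℝ := expNegInvGlue η with he
  have he0 : 0 < e := expNegInvGlue.pos_of_pos hη
  -- `k` absorbs both the error `B` of the truncation and the initial values, which are at most `1`
  set k : ℝ := (B + 1) / (η * e) with hk
  have hk0 : 0 < k := by positivity
  have hke : k * (η * e) = B + 1 := by rw [hk]; field_simp
  refine ⟨M, max 1 (k * (2 * Real.pi) * Real.exp 7), hM, le_max_left _ _, ?_⟩
  intro Q h hv hQ hsol hc hpos y w r δ hr hδ hdom hcq hq
  -- the compact sets carrying the test functions up to time `b < 0`
  set K : ℝ → Set P2 := fun b => ((fun p : ℝ × ℝ × ℝ =>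
    ((y + r ^ 2 * w * p.1 + r ^ 3 * p.2.1, w + r * p.2.2) : P2)) ''
      {p | p.1 ∈ Icc (-3) b ∧ |p.2.1| ≤ M * -p.1 ∧ |p.2.2| ≤ M}) with hKdef
  have hKc : ∀ b, IsCompact (K b) := fun b => region_compact y w r M b
  have hKQ : ∀ b < 0, K b ⊆ Q := by
    rintro b hb P ⟨⟨t, x, v⟩, ⟨h1, h2, h3⟩, rfl⟩
    have h4 := h1.1
    have h5 := h1.2
    simp only at h2 h3 h4 h5 ⊢
    have := hdom (-t) x v (by linarith) (by linarith) h2 h3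
    convert this using 2
    ring
  obtain ⟨ψt, ψx, ψv, ψvv, hψ, hψL⟩ := subTest_kin η
  obtain ⟨φt, φx, φv, φvv, hφ, hφL⟩ := cutTest_kin c
  have hφs := hφ.shift 1 δ
  rw [show (0:ℝ) - 1 = -1 by norm_num] at hφs
  set φ : ℝ × ℝ × ℝ → ℝ := fun p => cutTest c (p.1 + 1, p.2.1 - δ, p.2.2) with hφdef
  have hΦ := hψ.combine hφs (by norm_num : (-1:ℝ) ≤ 0) k
  have suppψ : ∀ t b : ℝ, -3 < t → t ≤ b → b < 0 → ∀ P, subTest η (kinCoord y w r t P) ≠ 0 →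
      P ∈ K b := by
    intro t b h1 h2 h3 P hP
    have hpa : η ≤ kolK (- -t, (kinCoord y w r t P).2.1, (kinCoord y w r t P).2.2) := by
      have := convF_pos_arg hP
      rw [neg_neg]
      change 0 < kolK (t, (kinCoord y w r t P).2.1, (kinCoord y w r t P).2.2) + η * (t - 1) at this
      nlinarith
    obtain ⟨l1, l2, -⟩ := hlev (-t) _ _ (by linarith) (by linarith) hpa
    exact mem_region hr ⟨h1.le, h2⟩ l1 l2
  have suppφ : ∀ t b : ℝ, -3 < t → t ≤ b → b < -1 → ∀ P, φ (kinCoord y w r t P) ≠ 0 →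
      P ∈ K b := by
    intro t b h1 h2 h3 P hP
    have hx : |(kinCoord y w r t P).2.1 - δ| < 1 := by
      by_contra hn
      exact hP (by simp [hφdef, cutTest, c.zero _ (not_lt.1 hn)])
    have hv : |(kinCoord y w r t P).2.2| < 1 := by
      by_contra hn
      exact hP (by simp [hφdef, cutTest, c.zero _ (not_lt.1 hn)])
    refine mem_region hr ⟨h1.le, h2⟩ ?_ (by linarith)
    have : |(kinCoord y w r t P).2.1| ≤ |(kinCoord y w r t P).2.1 - δ| + |δ| := by
      simpa using abs_add_le ((kinCoord y w r t P).2.1 - δ) δ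
    nlinarith
  have intψ : ∀ t ∈ Ioo (-3:ℝ) 0,
      IntegrableOn (fun P => h P * subTest η (kinCoord y w r t P)) Q := fun t ht =>
    integrableOn_mul_of_support hQ hc (hKc t) (hKQ t ht.2) (hψ.continuous_slice y w r ht.2)
      (suppψ t t ht.1 le_rfl ht.2)
  have intφ : ∀ t ∈ Ioo (-3:ℝ) (-1),
      IntegrableOn (fun P => h P * φ (kinCoord y w r t P)) Q := fun t ht =>
    integrableOn_mul_of_support hQ hc (hKc t) (hKQ t (by linarith [ht.2]))
      (hφs.continuous_slice y w r ht.2) (suppφ t t ht.1 le_rfl ht.2)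
  have monoψ : ∀ b < 0, MonotoneOn
      (fun t => ∫ P in Q, h P * subTest η (kinCoord y w r t P)) (Ioo (-3) b) := by
    intro b hb
    refine pairing_monotone hQ hsol hc hpos hr (hKc b) (hKQ b hb)
      (fun t ht => hψ.smooth t (ht.2.trans hb)) (fun t ht => hψ.dt t (ht.2.trans hb))
      (fun t ht => hψ.dx t (ht.2.trans hb)) (fun t ht => hψ.dv t (ht.2.trans hb))
      (fun t ht => hψ.dvv t (ht.2.trans hb)) ?_
      (fun t ht => suppψ t b ht.1 ht.2.le hb)
    intro t ht x v
    rw [hψL t (ht.2.trans hb)]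
    have := convF1_nonneg (kolK (t, x, v) + η * (t - 1))
    have := convF2_nonneg (kolK (t, x, v) + η * (t - 1))
    positivity
  -- on the support of the shifted cutoff, the argument of `convF` stays above `η`
  have hlow : ∀ t x v : ℝ, -3 < t → t < -1 → |x - δ| ≤ 1 → |v| ≤ 1 →
      η ≤ kolK (t, x, v) + η * (t - 1) := by
    intro t x v h1 h2 hx hv
    have : |x| ≤ |x - δ| + |δ| := by simpa using abs_add_le (x - δ) δ
    have := kolK_lower (s := -t) (x := x) (v := v) (by linarith) (by linarith) (by linarith) hv
    rw [neg_neg] at this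
    have e1 : Real.exp (-19) / 9 = 5 * η := by rw [hη']; ring
    nlinarith
  have monoΦ : ∀ b < -1, MonotoneOn
      (fun t => ∫ P in Q, h P * (k * subTest η (kinCoord y w r t P) - φ (kinCoord y w r t P)))
      (Ioo (-3) b) := by
    intro b hb
    refine pairing_monotone (ψ := fun p => k * subTest η p - φ p)
      (ψt := fun p => k * ψt p - φt (p.1 + 1, p.2.1 - δ, p.2.2))
      (ψx := fun p => k * ψx p - φx (p.1 + 1, p.2.1 - δ, p.2.2))
      (ψv := fun p => k * ψv p - φv (p.1 + 1, p.2.1 - δ, p.2.2))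
      (ψvv := fun p => k * ψvv p - φvv (p.1 + 1, p.2.1 - δ, p.2.2)) hQ hsol hc hpos hr
      (hKc b) (hKQ b (by linarith))
      (fun t ht => hΦ.smooth t (ht.2.trans hb)) (fun t ht => hΦ.dt t (ht.2.trans hb))
      (fun t ht => hΦ.dx t (ht.2.trans hb)) (fun t ht => hΦ.dv t (ht.2.trans hb))
      (fun t ht => hΦ.dvv t (ht.2.trans hb)) ?_ ?_
    · intro t ht x v
      have ht1 : t < -1 := ht.2.trans hb
      have e1 := hψL t (by linarith) x v
      have e2 := hφL (t + 1) (by linarith) (x - δ) v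
      have n1 := convF1_nonneg (kolK (t, x, v) + η * (t - 1))
      have n2 := mul_nonneg (convF2_nonneg (kolK (t, x, v) + η * (t - 1)))
        (sq_nonneg (kolKv (t, x, v)))
      have key : cutErr c (t + 1, x - δ, v)
          ≤ k * (η * convF1 (kolK (t, x, v) + η * (t - 1))) := by
        by_cases hin : |x - δ| ≤ 1 ∧ |v| ≤ 1
        · have b1 := cutErr_le c (s := -(t + 1)) (x := x - δ) (v := v) (by linarith)
            (by linarith [ht.1])
          rw [neg_neg] at b1
          have b2 := convF1_ge hη (hlow t x v ht.1 ht1 hin.1 hin.2)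
          have : k * (η * e) ≤ k * (η * convF1 (kolK (t, x, v) + η * (t - 1))) := by gcongr
          linarith
        · rw [cutErr_eq_zero c hin]; positivity
      have n3 := mul_nonneg hk0.le n2
      calc (0:ℝ) ≤ k * (ψt (t, x, v) + v * ψx (t, x, v) + ψvv (t, x, v))
            - (φt (t + 1, x - δ, v) + v * φx (t + 1, x - δ, v) + φvv (t + 1, x - δ, v)) := by
            rw [e1, e2]; linarith
        _ = _ := by simp only; ring
    · intro t ht P hP
      by_cases h0 : subTest η (kinCoord y w r t P) = 0
      · refine suppφ t b ht.1 ht.2.le hb P fun h1 => hP ?_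
        simp only [h0, h1]; ring
      · exact suppψ t b ht.1 ht.2.le (by linarith) P h0
  have hstart : 0 ≤ ∫ P in Q, h P * (k * subTest η (kinCoord y w r (-2) P)
      - φ (kinCoord y w r (-2) P)) := by
    refine setIntegral_nonneg hQ.measurableSet fun P hP => mul_nonneg (hpos P hP) ?_
    set x := (kinCoord y w r (-2) P).2.1 with hx
    set v := (kinCoord y w r (-2) P).2.2 with hv
    have hco : kinCoord y w r (-2) P = (-2, x, v) := rfl
    rw [hco]
    have hsn : 0 ≤ k * subTest η (-2, x, v) := mul_nonneg hk0.le (convF_nonneg _)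
    by_cases hin : |x - δ| ≤ 1 ∧ |v| ≤ 1
    · have b1 : k * (η * e) ≤ k * subTest η (-2, x, v) := by
        have := convF_ge hη (hlow (-2) x v (by norm_num) (by norm_num) hin.1 hin.2)
        exact mul_le_mul_of_nonneg_left this hk0.le
      have b2 : φ (-2, x, v) ≤ 1 := by
        simp only [hφdef, cutTest]
        rw [show (-2:ℝ) + 1 = -1 by norm_num]
        have g0 : 0 ≤ kolK (-1, x - δ, v) := (kolK_pos (by norm_num)).le
        have g1 : kolK (-1, x - δ, v) ≤ 1 := by
          refine (kolK_le one_pos).trans ?_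
          rw [one_pow, inv_one, one_mul, Real.exp_le_one_iff]
          have := sq_nonneg (x - δ)
          have := sq_nonneg v
          norm_num
          linarith
        exact mul_le_one₀ (mul_le_one₀ (c.le_one _) (c.nonneg _) (c.le_one _)) g0 g1
      linarith
    · have : φ (-2, x, v) = 0 := by
        simp only [hφdef, cutTest]
        rw [not_and_or, not_le, not_le] at hin
        rcases hin with hin | hin
        · rw [c.zero _ hin.le]; ring
        · rw [c.zero _ hin.le]; ring
      linarith
  have hpQ : ((y - r ^ 2 * w + r ^ 3 * δ, w) : P2) ∈ Q := by
    have := hdom 1 δ 0 one_pos (by norm_num) (by linarith) (by rw [abs_zero]; linarith)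
    simpa using this
  have hfin : ∀ ε > 0, (h (y - r ^ 2 * w + r ^ 3 * δ, w) - ε)
      ≤ k * (2 * Real.pi) * Real.exp 7 * (h (y, w) + ε) := by
    intro ε hε
    obtain ⟨t1, ht1, hup⟩ := sub_pairing_limit hQ hr hη hlev intψ hcq hq hε
    obtain ⟨t2, ht2, hdn⟩ := cut_pairing_limit (y := y) c hQ hc hpos hr hpQ intφ hε
    have ⟨p1, p2⟩ := ht1
    have ⟨p3, p4⟩ := ht2
    have j1 : t2 ∈ Ioo (-3) (t1 / 2) := ⟨by linarith, by linarith⟩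
    have j2 : t1 ∈ Ioo (-3) (t1 / 2) := ⟨by linarith, by linarith⟩
    have j3 : (-2 : ℝ) ∈ Ioo (-3) ((t2 - 1) / 2) := ⟨by norm_num, by linarith⟩
    have j4 : t2 ∈ Ioo (-3) ((t2 - 1) / 2) := ⟨by linarith, by linarith⟩
    have m1 := monoψ (t1 / 2) (by linarith) j1 j2 (by linarith)
    have m2 := monoΦ ((t2 - 1) / 2) (by linarith) j3 j4 p3.le
    have i1 := intψ t2 ⟨by linarith [ht2.1], by linarith [ht2.2]⟩
    have i2 := intφ t2 ⟨by linarith [ht2.1], ht2.2⟩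
    have split : ∫ P in Q, h P * (k * subTest η (kinCoord y w r t2 P) - φ (kinCoord y w r t2 P))
        = k * (∫ P in Q, h P * subTest η (kinCoord y w r t2 P))
          - ∫ P in Q, h P * φ (kinCoord y w r t2 P) := by
      rw [← integral_const_mul, ← integral_sub (i1.const_mul k) i2]
      congr 1
      ext P
      ring
    have m3 := hstart.trans m2
    simp only at m3 m1
    rw [split] at m3
    have m4 := mul_le_mul_of_nonneg_left (m1.trans hup) hk0.le
    have m5 : (h (y - r ^ 2 * w + r ^ 3 * δ, w) - ε) * (4 * Real.exp (-7) * r ^ 4)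
        ≤ k * ((h (y, w) + ε) * (8 * Real.pi * r ^ 4)) := by
      refine hdn.trans (le_trans ?_ m4)
      linarith
    have e7 : Real.exp (-7) * Real.exp 7 = 1 := by rw [← Real.exp_add]; norm_num
    have r4 : 0 < 4 * Real.exp (-7) * r ^ 4 := by positivity
    refine le_of_mul_le_mul_right (m5.trans_eq ?_) r4
    linear_combination (-8 * k * Real.pi * r ^ 4 * (h (y, w) + ε)) * e7
  set C0 := k * (2 * Real.pi) * Real.exp 7 with hC0
  have hC00 : 0 < C0 := by positivity
  have hlim : h (y - r ^ 2 * w + r ^ 3 * δ, w) ≤ C0 * h (y, w) := by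
    refine le_of_forall_pos_le_add fun ε hε => ?_
    have := hfin (ε / (C0 + 1)) (by positivity)
    have e2 : C0 * (ε / (C0 + 1)) + ε / (C0 + 1) = ε := by field_simp
    linarith
  exact hlim.trans (mul_le_mul_of_nonneg_right (le_max_right _ _) hq)

/-! ### Chaining -/

/-- Iterating an inequality for steps of length at most `d₀`; the number of factors depends only
on the distance. -/
lemma chain_le {g : ℝ → ℝ} {C d₀ lo hi : ℝ} (hC : 1 ≤ C) (hd₀ : 0 < d₀)
    (hg : ∀ x, lo ≤ x → x ≤ hi → 0 ≤ g x)
    (hstep : ∀ x d, lo ≤ x → 0 < d → d ≤ d₀ → x + d ≤ hi → g x ≤ C * g (x + d)) (n : ℕ) :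
    ∀ a b : ℝ, lo ≤ a → a ≤ b → b ≤ hi → b - a ≤ n * d₀ → g a ≤ C ^ n * g b := by
  induction n with
  | zero =>
    intro a b h1 h2 h3 h4
    have : a = b := by push_cast at h4; linarith
    simp [this]
  | succ n ih =>
    intro a b h1 h2 h3 h4
    have hgb : 0 ≤ g b := hg b (h1.trans h2) h3
    rcases h2.eq_or_lt with rfl | h2
    · exact le_mul_of_one_le_left hgb (one_le_pow₀ hC)
    have hd : 0 < min d₀ (b - a) := lt_min hd₀ (by linarith)
    have hle : a + min d₀ (b - a) ≤ b := by linarith [min_le_right d₀ (b - a)]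
    have s1 := hstep a _ h1 hd (min_le_left _ _) (hle.trans h3)
    have s2 := ih (a + min d₀ (b - a)) b (by linarith) hle h3 (by
      push_cast at h4
      rcases min_choice d₀ (b - a) with h | h <;> rw [h]
      · linarith
      · have : 0 ≤ (n:ℝ) * d₀ := by positivity
        linarith)
    calc g a ≤ C * g (a + min d₀ (b - a)) := s1
      _ ≤ C * (C ^ n * g b) := by gcongr
      _ = C ^ (n + 1) * g b := by ring

lemma exists_small_radius (M u a b c : ℝ) (ha : 0 < a) (hb : 0 < b) (hc : 0 < c) :
    ∃ r₀ > 0, ∀ r, 0 < r → r ≤ r₀ → r * M < a ∧ 3 * M * r ^ 3 < b ∧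
      3 * (r ^ 2 * u) + 3 * M * r ^ 3 < c := by
  have hev : ∀ᶠ r in nhdsWithin (0:ℝ) (Ioi 0), r * M < a ∧ 3 * M * r ^ 3 < b ∧
      3 * (r ^ 2 * u) + 3 * M * r ^ 3 < c := by
    refine Filter.Eventually.and ?_ (Filter.Eventually.and ?_ ?_) <;>
    · refine nhdsWithin_le_nhds ((isOpen_lt (by fun_prop) continuous_const).mem_nhds ?_)
      simpa
  obtain ⟨r₀, hr₀, hsub⟩ := mem_nhdsGT_iff_exists_Ioc_subset.1 hev
  exact ⟨r₀, hr₀, fun r h1 h2 => hsub ⟨h1, h2⟩⟩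

lemma exists_radius_sq {u d r₀ : ℝ} (hu : 0 < u) (hd : 0 < d) (hr₀ : 0 < r₀)
    (h : d ≤ r₀ ^ 2 * u) : ∃ r, 0 < r ∧ r ≤ r₀ ∧ r ^ 2 * u = d := by
  refine ⟨Real.sqrt (d / u), Real.sqrt_pos.2 (by positivity), ?_, ?_⟩
  · rw [Real.sqrt_le_left hr₀.le, div_le_iff₀ hu]; exact h
  · rw [Real.sq_sqrt (by positivity)]; field_simp

lemma exists_radius_cube {d r₀ : ℝ} (hd : 0 < d) (hr₀ : 0 < r₀)
    (h : d ≤ r₀ ^ 3) : ∃ r, 0 < r ∧ r ≤ r₀ ∧ r ^ 3 = d := by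
  have e : (d ^ ((3:ℕ):ℝ)⁻¹) ^ 3 = d := Real.rpow_inv_natCast_pow hd.le (by norm_num)
  refine ⟨d ^ ((3:ℕ):ℝ)⁻¹, Real.rpow_pos_of_pos hd _, ?_, e⟩
  refine le_of_pow_le_pow_left₀ (n := 3) (by norm_num) hr₀.le ?_
  rw [e]; exact h

theorem statement_11 (RR : ℝ) (hRR : 0 < RR) :
    -- part (a)
    (∀ v₀ : ℝ, 0 ≤ v₀ → v₀ ≤ RR / 2 →
      ∀ x₀ : ℝ, 0 < x₀ → x₀ < RR ^ 3 / 2 →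
      ∃ c : ℝ, 0 < c ∧
        ∀ h hv : P2 → ℝ, IsWeakSolOpen (Hrect RR) h hv →
          ContinuousOn h (Hrect RR) → (∀ p ∈ Hrect RR, 0 ≤ h p) →
          ∀ x₁ : ℝ, x₀ ≤ x₁ → x₁ < RR ^ 3 / 2 →
            h (x₀, v₀) ≤ c * h (x₁, v₀)) ∧
    -- part (b)
    (∀ v₀ : ℝ, -(RR / 2) ≤ v₀ → v₀ < 0 →
      ∃ c : ℝ, 0 < c ∧
        ∀ h hv : P2 → ℝ, IsWeakSolOpen (Hrect RR) h hv →
          ContinuousOn h (({(0:ℝ)} ×ˢ Set.Ioo (-RR) (0:ℝ)) ∪ Hrect RR) →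
          (∀ p ∈ Hrect RR, 0 ≤ h p) →
          ∀ x₀ x₁ : ℝ, 0 ≤ x₀ → x₀ ≤ x₁ → x₁ < RR ^ 3 / 2 →
            h (x₁, v₀) ≤ c * h (x₀, v₀)) := by
  obtain ⟨M, C, hM, hC, hH⟩ := harnack_step
  have hC0 : 0 < C := by linarith
  have hR3 : 0 < RR ^ 3 / 2 := by positivity
  have hQ := isOpen_Hrect RR
  -- bounds on the displacements over the cone of `harnack_step`
  have hx3 : ∀ {r s x : ℝ}, 0 < r → s ≤ 3 → |x| ≤ M * s →
      -(3 * M * r ^ 3) ≤ r ^ 3 * x ∧ r ^ 3 * x ≤ 3 * M * r ^ 3 := by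
    intro r s x hr hs hx
    have : |x| ≤ 3 * M := by nlinarith
    have := pow_pos hr 3
    rw [abs_le] at *
    constructor <;> nlinarith
  have hv1 : ∀ {r v : ℝ}, 0 < r → |v| ≤ M → -(r * M) ≤ r * v ∧ r * v ≤ r * M := by
    intro r v hr hv
    rw [abs_le] at hv
    constructor <;> nlinarith
  constructor
  · intro v₀ hv₀ hv₀R x₀ hx₀ hx₀R
    obtain ⟨r₀, hr₀, hsmall⟩ := exists_small_radius M v₀ (RR / 2) (RR ^ 3 / 2) x₀
      (by positivity) hR3 hx₀
    -- the largest admissible step: transport dominates for `v₀ > 0`, diffusion for `v₀ = 0`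
    set d₀ : ℝ := if v₀ = 0 then r₀ ^ 3 else r₀ ^ 2 * v₀ with hd₀
    have hd₀0 : 0 < d₀ := by
      rw [hd₀]; split_ifs with h0
      · positivity
      · have : 0 < v₀ := lt_of_le_of_ne hv₀ (Ne.symm h0)
        positivity
    obtain ⟨n, hn⟩ := exists_nat_ge (RR ^ 3 / 2 / d₀)
    rw [div_le_iff₀ hd₀0] at hn
    refine ⟨C ^ n, by positivity, ?_⟩
    intro h hv hsol hc hpos x₁ hx₁ hx₁R
    have hin : ∀ x, x₀ ≤ x → x ≤ x₁ → ((x, v₀) : P2) ∈ Hrect RR := fun x h1 h2 =>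
      ⟨⟨by simp only; linarith, by simp only; linarith⟩,
        by simp only; linarith, by simp only; linarith⟩
    refine chain_le (g := fun x => h (x, v₀)) hC hd₀0 (fun x h1 h2 => hpos _ (hin x h1 h2)) ?_ n
      x₀ x₁ le_rfl hx₁ le_rfl (by linarith)
    intro x d hx hd hdd hxd
    have hq := hin (x + d) (by linarith) hxd
    have hcq : ContinuousWithinAt h (Hrect RR) (x + d, v₀) := hc _ hq
    rw [hd₀] at hdd
    split_ifs at hdd with h0
    · subst h0
      obtain ⟨r, hr, hrr, hrd⟩ := exists_radius_cube hd hr₀ hdd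
      obtain ⟨c1, c2, c3⟩ := hsmall r hr hrr
      have := hH (Hrect RR) h hv hQ hsol hc hpos (x + d) 0 r (-1) hr (by simp) ?_ hcq (hpos _ hq)
      · convert this using 3
        linarith
      · intro s ξ ν hs hs3 hξ hν
        obtain ⟨a1, a2⟩ := hx3 hr hs3 hξ
        obtain ⟨a3, a4⟩ := hv1 hr hν
        refine ⟨⟨?_, ?_⟩, ?_, ?_⟩ <;> simp only <;> linarith
    · have hv₀' : 0 < v₀ := lt_of_le_of_ne hv₀ (Ne.symm h0)
      obtain ⟨r, hr, hrr, hrd⟩ := exists_radius_sq hv₀' hd hr₀ hdd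
      obtain ⟨c1, c2, c3⟩ := hsmall r hr hrr
      have := hH (Hrect RR) h hv hQ hsol hc hpos (x + d) v₀ r 0 hr (by simp) ?_ hcq (hpos _ hq)
      · convert this using 3
        linarith
      · intro s ξ ν hs hs3 hξ hν
        obtain ⟨a1, a2⟩ := hx3 hr hs3 hξ
        obtain ⟨a3, a4⟩ := hv1 hr hν
        rw [hrd] at c3 ⊢
        have := mul_pos hd hs
        have : d * s ≤ d * 3 := by gcongr
        refine ⟨⟨?_, ?_⟩, ?_, ?_⟩ <;> simp only <;> linarith
  · intro v₀ hv₀R hv₀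
    have hu : 0 < -v₀ := by linarith
    obtain ⟨r₀, hr₀, hsmall⟩ := exists_small_radius M (-v₀) (min (RR / 2) (-v₀)) (RR ^ 3 / 2)
      (RR ^ 3 / 2) (by positivity) hR3 hR3
    have hd₀0 : 0 < r₀ ^ 2 * (-v₀) := by positivity
    obtain ⟨n, hn⟩ := exists_nat_ge (RR ^ 3 / 2 / (r₀ ^ 2 * (-v₀)))
    rw [div_le_iff₀ hd₀0] at hn
    refine ⟨C ^ n, by positivity, ?_⟩
    intro h hv hsol hcu hpos x₀ x₁ hx₀ hx₁ hx₁R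
    have hc : ContinuousOn h (Hrect RR) := hcu.mono subset_union_right
    have hcw : ∀ x, 0 ≤ x → x ≤ x₁ → ContinuousWithinAt h (Hrect RR) (x, v₀) := by
      intro x h1 h2
      refine (hcu (x, v₀) ?_).mono subset_union_right
      rcases h1.eq_or_lt with rfl | h1
      · exact Or.inl ⟨rfl, by simp only; linarith, hv₀⟩
      · exact Or.inr ⟨⟨h1, by simp only; linarith⟩, by simp only; linarith, by simp only; linarith⟩
    -- nonnegativity passes to the boundary part `x = 0` by continuity
    have hnn : ∀ x, 0 ≤ x → x ≤ x₁ → 0 ≤ h (x, v₀) := by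
      intro x h1 h2
      have hcl : ((x, v₀) : P2) ∈ closure (Hrect RR) := by
        rw [Hrect, closure_prod_eq, closure_Ioo (by positivity), closure_Ioo (by linarith)]
        exact ⟨⟨h1, by simp only; linarith⟩, by simp only; linarith, by simp only; linarith⟩
      have := mem_closure_iff_nhdsWithin_neBot.1 hcl
      exact ge_of_tendsto (hcw x h1 h2) (eventually_mem_nhdsWithin.mono fun p hp => hpos p hp)
    have key := chain_le (g := fun x => h (-x, v₀)) (lo := -x₁) (hi := -x₀) hC hd₀0
      (fun x h1 h2 => hnn _ (by linarith) (by linarith)) ?_ n (-x₁) (-x₀) le_rfl (by linarith)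
      le_rfl (by linarith)
    · simpa using key
    intro x d hx hd hdd hxd
    obtain ⟨r, hr, hrr, hrd⟩ := exists_radius_sq hu hd hr₀ hdd
    obtain ⟨c1, c2, c3⟩ := hsmall r hr hrr
    rw [lt_min_iff] at c1
    have := hH (Hrect RR) h hv hQ hsol hc hpos (-(x + d)) v₀ r 0 hr (by simp) ?_
      (hcw _ (by linarith) (by linarith)) (hnn _ (by linarith) (by linarith))
    · convert this using 3
      linarith
    · intro s ξ ν hs hs3 hξ hν
      obtain ⟨a1, a2⟩ := hx3 hr hs3 hξ
      obtain ⟨a3, a4⟩ := hv1 hr hν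
      have e1 : r ^ 2 * v₀ * s = -(d * s) := by rw [← hrd]; ring
      rw [e1]
      have : d * s ≤ d * 3 := by gcongr
      have hlow : 0 < d * s + r ^ 3 * ξ := by
        have b1 : 0 < s * r ^ 2 * (-v₀ - r * M) := by
          have : 0 < -v₀ - r * M := by linarith
          positivity
        have b2 : -(r ^ 3 * (M * s)) ≤ r ^ 3 * ξ := by
          have := (abs_le.1 hξ).1
          have := pow_pos hr 3
          nlinarith
        rw [← hrd]
        linarith
      refine ⟨⟨?_, ?_⟩, ?_, ?_⟩ <;> simp only <;> linarith
end
end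

section
/- Let v₀ < 0 and R > 0 with v₀ ≤ −2R. Let h be a bounded smooth function on (0, 8R³)×(v₀ − 2R, v₀ + 2R) satisfying v ∂ₓh(x,v) = ∂_vvh(x,v) at every point. Then for all integers i, j ≥ 0 there exists a constant c > 0 depending only on i and j such that sup over (0, R³)×(v₀ − R, v₀ + R) of |∂ₓ^i ∂_v^j h| ≤ c R^{−(3i+j)} (|v₀|/R)^{(3i+j)/2} · sup over (0, 8R³)×(v₀ − 2R, v₀ + 2R) of |h|. -/
/-!
Since `v < 0` on the domain, `v ∂ₓh = ∂ᵥᵥh` is a nondegenerate parabolic equation with time `-x`,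
and the estimate is an interior estimate up to the final time `x = 0`. The proof is Bernstein's
method. With a polynomial cutoff `η` on a box of size `τ × ℓ`, where `τ ≈ |v₀| ℓ²`, the quantity
`F = τ² η⁴ (∂ₓh)² + A ℓ² η² (∂ᵥh)² + B h²` satisfies `∂ᵥᵥF - v ∂ₓF ≥ 0` for suitable absolute
constants `A ≪ B`, hence attains its maximum where `η = 0`, where it is at most `B K²`. This bounds
`τ |∂ₓh|` and `ℓ |∂ᵥh|` simultaneously (`bernstein_step`).

The coefficients do not depend on `x`, so `∂ₓh` is again a solution and the bound can be iterated
on nested boxes to control all `∂ₓⁱh` (`x_estimate`). Higher `v`-derivatives follow from the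
equation itself, `∂ᵥʲ⁺²h = ∂ᵥʲ(v ∂ₓh) = v ∂ᵥʲ∂ₓh + j ∂ᵥʲ⁻¹∂ₓh` (`v_estimate`). With
`ρ = (|v₀| / R) ^ (1 / 2) ≥ 1`, admissible sizes are `τ ≈ R³` and `ℓ ≈ R / ρ`, so the derivative
`∂ₓⁱ∂ᵥʲh` costs `R ^ (-3i) (ρ / R) ^ j ≤ (ρ / R) ^ (3i + j)`.
-/

noncomputable section

open MeasureTheory Set Filter
open scoped ENNReal

/-- partial derivative in the first (space) variable -/
def pdx (h : P2 → ℝ) : P2 → ℝ := fun p => fderiv ℝ h p ((1:ℝ), (0:ℝ))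

/-- partial derivative in the second (velocity) variable -/
def pdv (h : P2 → ℝ) : P2 → ℝ := fun p => fderiv ℝ h p ((0:ℝ), (1:ℝ))

/-! ### Derivative tests at a maximum -/

theorem deriv_nonpos_of_right_max {f : ℝ → ℝ} {f' a b : ℝ} (hab : a < b)
    (hf : HasDerivAt f f' a) (hm : ∀ t ∈ Icc a b, f t ≤ f a) : f' ≤ 0 := by
  by_contra! h
  have h1 := hf.hasDerivWithinAt (s := Ioi a)
  rw [hasDerivWithinAt_iff_tendsto_slope' (by simp)] at h1
  have h2 := (h1.eventually (lt_mem_nhds h)).and (Ioc_mem_nhdsGT hab)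
  obtain ⟨t, ht, ht2⟩ := h2.exists
  rw [slope_def_field] at ht
  have := hm t ⟨ht2.1.le, ht2.2⟩
  have : (f t - f a) / (t - a) ≤ 0 := div_nonpos_of_nonpos_of_nonneg (by linarith) (by linarith [ht2.1])
  linarith

theorem snd_deriv_nonpos_of_max {f g : ℝ → ℝ} {g' a : ℝ}
    (hf : ∀ᶠ t in nhds a, HasDerivAt f (g t) t) (hg : HasDerivAt g g' a)
    (hm : IsLocalMax f a) : g' ≤ 0 := by
  by_contra! h
  have e1 : deriv f =ᶠ[nhds a] g := hf.mono fun t ht => ht.deriv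
  have e2 : deriv (deriv f) a = g' := by rw [e1.deriv_eq, hg.deriv]
  have hmin : IsLocalMin f a := isLocalMin_of_deriv_deriv_pos (by rw [e2]; exact h)
    (hm.deriv_eq_zero) hf.self_of_nhds.continuousAt
  have e3 : f =ᶠ[nhds a] fun _ => f a := by
    filter_upwards [hm, hmin] with t h1 h2 using le_antisymm h1 h2
  have e4 := e3.deriv.deriv_eq
  rw [e2] at e4
  simp at e4
  linarith

/-! ### Calculus of the partial derivatives -/

/-- `h` is a smooth classical solution of `v ∂ₓh = ∂ᵥᵥh` on `D`. -/
def IsSol (D : Set P2) (h : P2 → ℝ) : Prop :=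
  ContDiffOn ℝ ((⊤ : ℕ∞) : WithTop ℕ∞) h D ∧ ∀ p ∈ D, p.2 * pdx h p = pdv (pdv h) p

section calculus
variable {D : Set P2} {f g : P2 → ℝ}

theorem smooth_fderiv_apply (hD : IsOpen D) (hf : ContDiffOn ℝ ((⊤ : ℕ∞) : WithTop ℕ∞) f D)
    (e : P2) : ContDiffOn ℝ ((⊤ : ℕ∞) : WithTop ℕ∞) (fun p => fderiv ℝ f p e) D :=
  (hf.fderiv_of_isOpen hD (by simp)).clm_apply contDiffOn_const

theorem smooth_pdx (hD : IsOpen D) (hf : ContDiffOn ℝ ((⊤ : ℕ∞) : WithTop ℕ∞) f D) :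
    ContDiffOn ℝ ((⊤ : ℕ∞) : WithTop ℕ∞) (pdx f) D := smooth_fderiv_apply hD hf _

theorem smooth_pdv (hD : IsOpen D) (hf : ContDiffOn ℝ ((⊤ : ℕ∞) : WithTop ℕ∞) f D) :
    ContDiffOn ℝ ((⊤ : ℕ∞) : WithTop ℕ∞) (pdv f) D := smooth_fderiv_apply hD hf _

theorem smooth_pdv_iter (hD : IsOpen D) (hf : ContDiffOn ℝ ((⊤ : ℕ∞) : WithTop ℕ∞) f D) (j : ℕ) :
    ContDiffOn ℝ ((⊤ : ℕ∞) : WithTop ℕ∞) (pdv^[j] f) D := by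
  induction j with
  | zero => exact hf
  | succ j ih => rw [Function.iterate_succ_apply']; exact smooth_pdv hD ih

theorem smooth_diffAt (hD : IsOpen D) (hf : ContDiffOn ℝ ((⊤ : ℕ∞) : WithTop ℕ∞) f D) {p : P2}
    (hp : p ∈ D) : DifferentiableAt ℝ f p :=
  (hf.contDiffAt (hD.mem_nhds hp)).differentiableAt (by simp)

theorem pdx_congr (hD : IsOpen D) (h : EqOn f g D) : EqOn (pdx f) (pdx g) D := by
  intro p hp
  simp only [pdx]
  rw [(h.eventuallyEq_of_mem (hD.mem_nhds hp)).fderiv_eq]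

theorem pdv_congr (hD : IsOpen D) (h : EqOn f g D) : EqOn (pdv f) (pdv g) D := by
  intro p hp
  simp only [pdv]
  rw [(h.eventuallyEq_of_mem (hD.mem_nhds hp)).fderiv_eq]

theorem pdv_iter_congr (hD : IsOpen D) (h : EqOn f g D) (j : ℕ) :
    EqOn (pdv^[j] f) (pdv^[j] g) D := by
  induction j with
  | zero => exact h
  | succ j ih => simp only [Function.iterate_succ_apply']; exact pdv_congr hD ih

theorem pdx_pdv_comm (hD : IsOpen D) (hf : ContDiffOn ℝ ((⊤ : ℕ∞) : WithTop ℕ∞) f D) :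
    EqOn (pdx (pdv f)) (pdv (pdx f)) D := by
  intro p hp
  have hs : IsSymmSndFDerivAt ℝ f p :=
    (hf.contDiffAt (hD.mem_nhds hp)).isSymmSndFDerivAt (by simp; norm_cast)
  have hd : DifferentiableAt ℝ (fderiv ℝ f) p :=
    ((hf.fderiv_of_isOpen hD (m := 1) (by norm_cast)).contDiffAt (hD.mem_nhds hp)).differentiableAt
      (by simp)
  have key : ∀ a b : P2, fderiv ℝ (fun q => fderiv ℝ f q a) p b = fderiv ℝ (fderiv ℝ f) p b a := by
    intro a b
    rw [fderiv_clm_apply hd (by fun_prop)]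
    simp
  exact (key _ _).trans ((hs _ _).trans (key _ _).symm)

theorem pdx_pdv_iter_comm (hD : IsOpen D) (hf : ContDiffOn ℝ ((⊤ : ℕ∞) : WithTop ℕ∞) f D) (j : ℕ) :
    EqOn (pdx (pdv^[j] f)) (pdv^[j] (pdx f)) D := by
  induction j with
  | zero => exact fun _ _ => rfl
  | succ j ih =>
    simp only [Function.iterate_succ_apply']
    exact (pdx_pdv_comm hD (smooth_pdv_iter hD hf j)).trans (pdv_congr hD ih)

theorem pdx_iter_pdv_iter_comm (hD : IsOpen D) (hf : ContDiffOn ℝ ((⊤ : ℕ∞) : WithTop ℕ∞) f D)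
    (i j : ℕ) : EqOn (pdx^[i] (pdv^[j] f)) (pdv^[j] (pdx^[i] f)) D := by
  have hx : ∀ i, ContDiffOn ℝ ((⊤ : ℕ∞) : WithTop ℕ∞) (pdx^[i] f) D := by
    intro i
    induction i with
    | zero => exact hf
    | succ i ih => rw [Function.iterate_succ_apply']; exact smooth_pdx hD ih
  induction i with
  | zero => exact fun _ _ => rfl
  | succ i ih =>
    simp only [Function.iterate_succ_apply']
    exact (pdx_congr hD ih).trans (pdx_pdv_iter_comm hD (hx i) j)

theorem hasDerivAt_x {x v : ℝ} (hf : DifferentiableAt ℝ f (x, v)) :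
    HasDerivAt (fun t => f (t, v)) (pdx f (x, v)) x :=
  hf.hasFDerivAt.comp_hasDerivAt x ((hasDerivAt_id x).prodMk (hasDerivAt_const x v))

theorem hasDerivAt_v {x v : ℝ} (hf : DifferentiableAt ℝ f (x, v)) :
    HasDerivAt (fun t => f (x, t)) (pdv f (x, v)) v :=
  hf.hasFDerivAt.comp_hasDerivAt v ((hasDerivAt_const v x).prodMk (hasDerivAt_id v))

theorem pdx_snd_mul {p : P2} (hf : DifferentiableAt ℝ f p) :
    pdx (fun p => p.2 * f p) p = p.2 * pdx f p := by
  simp only [pdx]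
  rw [fderiv_fun_mul differentiableAt_snd hf]
  simp [fderiv_snd]

theorem pdv_snd_mul {p : P2} (hf : DifferentiableAt ℝ f p) :
    pdv (fun p => p.2 * f p) p = p.2 * pdv f p + f p := by
  simp only [pdv]
  rw [fderiv_fun_mul differentiableAt_snd hf]
  simp [fderiv_snd]

/-- Leibniz rule for `∂ᵥʲ (v f)`; at `j = 0` the factor `j` kills the term with index `j - 1`. -/
theorem pdv_iter_snd_mul (hD : IsOpen D) (hf : ContDiffOn ℝ ((⊤ : ℕ∞) : WithTop ℕ∞) f D) (j : ℕ) :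
    EqOn (pdv^[j] (fun p => p.2 * f p))
      (fun p => p.2 * pdv^[j] f p + j * pdv^[j - 1] f p) D := by
  induction j with
  | zero => intro p _; simp
  | succ j ih =>
    intro p hp
    rw [Function.iterate_succ_apply', pdv_congr hD ih hp]
    have d1 := smooth_diffAt hD (smooth_pdv_iter hD hf j) hp
    have d2 := smooth_diffAt hD (smooth_pdv_iter hD hf (j - 1)) hp
    have e1 := pdv_snd_mul d1
    have e2 : pdv (fun p => p.2 * pdv^[j] f p + j * pdv^[j - 1] f p) p
        = pdv (fun p => p.2 * pdv^[j] f p) p + j * pdv (pdv^[j - 1] f) p := by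
      simp only [pdv]
      rw [fderiv_fun_add (differentiableAt_snd.fun_mul d1) (d2.const_mul _), fderiv_const_mul d2]
      simp
    rw [e2, e1]
    simp only [← Function.iterate_succ_apply' pdv]
    rcases j with _ | j
    · simp
    · simp; ring

theorem IsSol.pdx (hD : IsOpen D) (hf : IsSol D f) : IsSol D (pdx f) := by
  refine ⟨smooth_pdx hD hf.1, fun p hp => ?_⟩
  rw [← pdx_snd_mul (smooth_diffAt hD (smooth_pdx hD hf.1) hp), pdx_congr hD hf.2 hp,
    pdx_pdv_comm hD (smooth_pdv hD hf.1) hp, pdv_congr hD (pdx_pdv_comm hD hf.1) hp]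

end calculus

/-! ### Bernstein estimate on a box -/

/-- Positivity, in dimensionless variables, of `(∂ᵥᵥ - v ∂ₓ) F` for the Bernstein quantity `F` of
`bernstein_step`. Here `n, N1, N2, Ns` stand for the cutoff `η` and its scaled derivatives
`η_v, η_vv, η_x`; `p, q, r` for the scaled `∂ᵥh, ∂ₓh, ∂ₓ∂ᵥh`; `k = -v ℓ² / τ` and `e = ℓ³ / τ`.
The weights `1 ≪ 2400 ≪ 165000` are chosen so that each good term absorbs the errors produced by
the term of the next higher order. -/
theorem bernstein_algebra {n N1 N2 Ns k e p q r B K : ℝ} (hn0 : 0 ≤ n) (hn1 : n ≤ 1)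
    (hN1 : |N1| ≤ 2) (hN2 : -2 ≤ N2) (hNs : -1 ≤ Ns) (hk0 : 1 / 4 ≤ k) (hk1 : k ≤ 7 / 4)
    (he0 : 0 ≤ e) (hek : e ≤ k) (hB : B = 165000) (hK : 0 < K) :
    0 < 12 * n ^ 2 * N1 ^ 2 * q ^ 2 + 4 * n ^ 3 * (N2 + k * Ns) * q ^ 2 + 16 * n ^ 3 * N1 * q * r
      + 2 * n ^ 4 * r ^ 2
      + 2400 * (2 * N1 ^ 2 * p ^ 2 + 2 * n * (N2 + k * Ns) * p ^ 2 - 8 * n * N1 * k * p * q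
        + 2 * n ^ 2 * k ^ 2 * q ^ 2 + 2 * n ^ 2 * e * p * q)
      + 2 * B * p ^ 2 + k * B * K ^ 2 := by
  subst hB
  have hN1' : N1 ^ 2 ≤ 4 := by nlinarith [abs_nonneg N1, sq_abs N1]
  have hN : -(15 / 4) ≤ N2 + k * Ns := by nlinarith
  have hn3 : n ^ 3 ≤ n ^ 2 := by nlinarith [sq_nonneg n]
  have hn30 : 0 ≤ n ^ 3 := by positivity
  have hn2 : n ^ 2 ≤ 1 := by nlinarith
  -- `t1`, `t2` bound below the part coming from `η⁴ q²`: Young's inequality lets `2 η⁴ r²` absorb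
  -- the cross term, at the price of a multiple of `η² q²`
  have t1 : -(15 * n ^ 2 * q ^ 2) ≤ 4 * n ^ 3 * (N2 + k * Ns) * q ^ 2 := by
    have h1 : -(15 / 4) * n ^ 2 ≤ n ^ 3 * (N2 + k * Ns) := by nlinarith
    nlinarith [sq_nonneg q]
  have t2 : -(128 * n ^ 2 * q ^ 2) ≤ 16 * n ^ 3 * N1 * q * r + 2 * n ^ 4 * r ^ 2 := by
    have h1 : 0 ≤ 2 * (n ^ 2 * r + 4 * n * N1 * q) ^ 2 := by positivity
    have h2 : n ^ 2 * q ^ 2 * N1 ^ 2 ≤ n ^ 2 * q ^ 2 * 4 :=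
      mul_le_mul_of_nonneg_left hN1' (by positivity)
    nlinarith
  -- `t3`, `t4`, `t5` treat the part coming from `η² p²`; the cross terms spend half of the good
  -- term `2 k² η² q²`, the rest of which pays for `t1`, `t2` since `2400 k² ≥ 150 ≥ 143`
  have t3 : -(15 / 2 * p ^ 2) ≤ 2 * n * (N2 + k * Ns) * p ^ 2 := by
    have h1 : -(15 / 4) ≤ n * (N2 + k * Ns) := by nlinarith
    nlinarith [sq_nonneg p]
  have t4 : -(128 * p ^ 2) - k ^ 2 / 2 * n ^ 2 * q ^ 2 ≤ - 8 * n * N1 * k * p * q := by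
    have h1 : 0 ≤ (8 * N1 * p - k * n * q) ^ 2 := by positivity
    have h2 : p ^ 2 * N1 ^ 2 ≤ p ^ 2 * 4 := mul_le_mul_of_nonneg_left hN1' (by positivity)
    nlinarith
  have t5 : -(2 * p ^ 2) - k ^ 2 / 2 * n ^ 2 * q ^ 2 ≤ 2 * n ^ 2 * e * p * q := by
    have h1 : 0 ≤ (2 * p * n + e * n * q) ^ 2 := by positivity
    have h2 : e ^ 2 ≤ k ^ 2 := by gcongr
    have h3 : n ^ 2 * q ^ 2 * e ^ 2 ≤ n ^ 2 * q ^ 2 * k ^ 2 :=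
      mul_le_mul_of_nonneg_left h2 (by positivity)
    have h4 : p ^ 2 * n ^ 2 ≤ p ^ 2 * 1 := mul_le_mul_of_nonneg_left hn2 (by positivity)
    nlinarith
  have t6 : n ^ 2 * q ^ 2 * (1 / 16) ≤ n ^ 2 * q ^ 2 * k ^ 2 :=
    mul_le_mul_of_nonneg_left (by nlinarith) (by positivity)
  have t7 : 0 < k * 165000 * K ^ 2 := by positivity
  have t8 : 0 ≤ 12 * n ^ 2 * N1 ^ 2 * q ^ 2 := by positivity
  have t9 : 0 ≤ N1 ^ 2 * p ^ 2 := by positivity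
  have t10 : 0 ≤ n ^ 2 * q ^ 2 := by positivity
  nlinarith [sq_nonneg p]

/-- At a local maximum in `v` of the Bernstein quantity its second `v`-derivative is nonpositive.
The functions `H, V, X, Y` are the `v`-slices of `h, ∂ᵥh, ∂ₓh, ∂ₓ∂ᵥh`, and the equation has been
used for both `h` and `∂ₓh`: `V' = v X` and `Y' = v Z` with `Z = ∂ₓₓh`. -/
theorem bernstein_second_deriv {n n1 H V X Y : ℝ → ℝ} {n2 Z v B T L c : ℝ}
    (hn : ∀ t, HasDerivAt n (n1 t) t) (hn1 : HasDerivAt n1 n2 v)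
    (hH : ∀ᶠ t in nhds v, HasDerivAt H (V t) t) (hV : ∀ᶠ t in nhds v, HasDerivAt V (t * X t) t)
    (hX : ∀ᶠ t in nhds v, HasDerivAt X (Y t) t) (hY : HasDerivAt Y (v * Z) v)
    (hm : IsLocalMax (fun t => T * (n t ^ 4 * X t ^ 2) + L * (n t ^ 2 * V t ^ 2)
      + B * H t ^ 2 + c) v) :
    T * (12 * n v ^ 2 * n1 v ^ 2 * X v ^ 2 + 4 * n v ^ 3 * n2 * X v ^ 2
        + 16 * n v ^ 3 * n1 v * X v * Y v + 2 * n v ^ 4 * Y v ^ 2 + 2 * n v ^ 4 * X v * (v * Z))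
      + L * (2 * n1 v ^ 2 * V v ^ 2 + 2 * n v * n2 * V v ^ 2 + 8 * n v * n1 v * V v * (v * X v)
        + 2 * n v ^ 2 * (v * X v) ^ 2 + 2 * n v ^ 2 * V v * (X v + v * Y v))
      + B * (2 * V v ^ 2 + 2 * H v * (v * X v)) ≤ 0 := by
  refine snd_deriv_nonpos_of_max (g := fun t =>
    T * (4 * n t ^ 3 * n1 t * X t ^ 2 + 2 * n t ^ 4 * X t * Y t)
      + L * (2 * n t * n1 t * V t ^ 2 + 2 * n t ^ 2 * V t * (t * X t))
      + B * (2 * H t * V t)) ?_ ?_ hm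
  · filter_upwards [hH, hV, hX] with t h1 h2 h3
    refine HasDerivAt.congr_deriv ((((((((hn t).pow 4).mul (h3.pow 2)).const_mul T).add
      ((((hn t).pow 2).mul (h2.pow 2)).const_mul L)).add ((h1.pow 2).const_mul B)).add_const c)) ?_
    simp
    ring
  · have h1 := hH.self_of_nhds
    have h2 := hV.self_of_nhds
    have h3 := hX.self_of_nhds
    have h0 := hn v
    refine HasDerivAt.congr_deriv (((((((((h0.pow 3).const_mul 4).mul hn1).mul (h3.pow 2)).add
      ((((h0.pow 4).const_mul 2).mul h3).mul hY)).const_mul T).add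
      ((((((h0.const_mul 2).mul hn1).mul (h2.pow 2)).add
      ((((h0.pow 2).const_mul 2).mul h2).mul ((hasDerivAt_id v).mul h3))).const_mul L))).add
      (((h1.const_mul 2).mul h2).const_mul B))) ?_
    simp
    ring

/-- At a maximum over `[x, b]` attained at `x`, the `x`-derivative of the Bernstein quantity is
nonpositive. The functions `H, V, X` are the `x`-slices of `h, ∂ᵥh, ∂ₓh`. -/
theorem bernstein_first_deriv {n H V X : ℝ → ℝ} {ns Y Z x b x₁ B T L c : ℝ} (hxb : x < b)
    (hn : HasDerivAt n ns x) (hH : HasDerivAt H (X x) x) (hV : HasDerivAt V Y x)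
    (hX : HasDerivAt X Z x)
    (hm : ∀ t ∈ Icc x b, T * (n t ^ 4 * X t ^ 2) + L * (n t ^ 2 * V t ^ 2)
      + B * H t ^ 2 + c * (t - x₁) ≤ T * (n x ^ 4 * X x ^ 2) + L * (n x ^ 2 * V x ^ 2)
      + B * H x ^ 2 + c * (x - x₁)) :
    T * (4 * n x ^ 3 * ns * X x ^ 2 + 2 * n x ^ 4 * X x * Z)
      + L * (2 * n x * ns * V x ^ 2 + 2 * n x ^ 2 * V x * Y) + B * (2 * H x * X x) + c ≤ 0 := by
  refine deriv_nonpos_of_right_max hxb (f := fun t => T * (n t ^ 4 * X t ^ 2)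
    + L * (n t ^ 2 * V t ^ 2) + B * H t ^ 2 + c * (t - x₁)) ?_ hm
  refine HasDerivAt.congr_deriv (((((((hn.pow 4).mul (hX.pow 2)).const_mul T).add
      (((hn.pow 2).mul (hV.pow 2)).const_mul L)).add ((hH.pow 2).const_mul B)).add
      (((hasDerivAt_id x).sub_const x₁).const_mul c))) ?_
  simp
  ring

set_option maxHeartbeats 1000000 in
/-- Bernstein's estimate: a solution bounded by `K` on the box `[x₁, x₁ + τ] × [v₁ - ℓ, v₁ + ℓ]`,
where `τ` is comparable to `|v| ℓ²`, satisfies `τ |∂ₓh| + ℓ |∂ᵥh| ≲ K` at `(x₁, v₁)`. As `v < 0`,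
the time of the parabolic equation is `-x`, so the initial side of the box is `x = x₁ + τ` and the
point `(x₁, v₁)` lies on the final side, where the maximum principle needs no boundary data. -/
theorem bernstein_step {D : Set P2} {h : P2 → ℝ} {x₁ v₁ τ ℓ K : ℝ} (hD : IsOpen D)
    (hsol : IsSol D h) (hτ : 0 < τ) (hℓ : 0 < ℓ) (hK : 0 < K)
    (hbox : Icc x₁ (x₁ + τ) ×ˢ Icc (v₁ - ℓ) (v₁ + ℓ) ⊆ D)
    (hbd : ∀ p ∈ Icc x₁ (x₁ + τ) ×ˢ Icc (v₁ - ℓ) (v₁ + ℓ), |h p| ≤ K)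
    (hv : ∀ v ∈ Icc (v₁ - ℓ) (v₁ + ℓ),
      1 / 4 * τ ≤ -v * ℓ ^ 2 ∧ -v * ℓ ^ 2 ≤ 7 / 4 * τ ∧ ℓ ≤ -v) :
    τ * |pdx h (x₁, v₁)| ≤ 600 * K ∧ ℓ * |pdv h (x₁, v₁)| ≤ 600 * K := by
  -- a polynomial cutoff, zero exactly on the parabolic boundary and one at `(x₁, v₁)`
  set η : ℝ → ℝ → ℝ := fun x v => (1 - (x - x₁) / τ) * (1 - ((v - v₁) / ℓ) ^ 2) with hη
  -- the last summand only serves to make `(∂ᵥᵥ - v ∂ₓ) F` strictly positive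
  set F : P2 → ℝ := fun p => τ ^ 2 * (η p.1 p.2 ^ 4 * pdx h p ^ 2)
    + 2400 * ℓ ^ 2 * (η p.1 p.2 ^ 2 * pdv h p ^ 2) + 165000 * h p ^ 2
    + 165000 * K ^ 2 / τ * (p.1 - x₁) with hF
  have sx := smooth_pdx hD hsol.1
  have sv := smooth_pdv hD hsol.1
  have sxv := smooth_pdv hD sx
  have solx := hsol.pdx hD
  have hFc : ContinuousOn F (Icc x₁ (x₁ + τ) ×ˢ Icc (v₁ - ℓ) (v₁ + ℓ)) := by
    have c1 := sx.continuousOn.mono hbox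
    have c2 := sv.continuousOn.mono hbox
    have c3 := hsol.1.continuousOn.mono hbox
    simp only [hF, hη]
    fun_prop
  obtain ⟨⟨x, v⟩, hp, hmax⟩ := (isCompact_Icc.prod isCompact_Icc).exists_isMaxOn
    ⟨(x₁, v₁), ⟨by simp [hτ.le], by simp [hℓ.le]⟩⟩ hFc
  have hx := hp.1
  have hv' := hp.2
  simp only at hx hv'
  have hmax' : ∀ q ∈ Icc x₁ (x₁ + τ) ×ˢ Icc (v₁ - ℓ) (v₁ + ℓ), F q ≤ F (x, v) := hmax
  have hbound : F (x, v) ≤ 330000 * K ^ 2 := by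
    by_cases hb : η x v = 0
    · have e1 : F (x, v) = 165000 * h (x, v) ^ 2 + 165000 * K ^ 2 / τ * (x - x₁) := by
        simp [hF, hb]
      have e2 : h (x, v) ^ 2 ≤ K ^ 2 := sq_le_sq' (by linarith [abs_le.1 (hbd _ hp)])
        (abs_le.1 (hbd _ hp)).2
      have e3 : 165000 * K ^ 2 / τ * (x - x₁) ≤ 165000 * K ^ 2 / τ * τ :=
        mul_le_mul_of_nonneg_left (by linarith [hx.2]) (by positivity)
      rw [div_mul_cancel₀ _ hτ.ne'] at e3
      linarith
    · exfalso
      have hxb : x < x₁ + τ := by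
        refine lt_of_le_of_ne hx.2 fun e => hb ?_
        simp only [hη, e]
        field_simp
        ring
      have hva : v₁ - ℓ < v := by
        refine lt_of_le_of_ne hv'.1 fun e => hb ?_
        simp only [hη, ← e]
        field_simp
        ring
      have hvb : v < v₁ + ℓ := by
        refine lt_of_le_of_ne hv'.2 fun e => hb ?_
        simp only [hη, e]
        field_simp
        ring
      have hnear : ∀ᶠ t in nhds v, (x, t) ∈ Icc x₁ (x₁ + τ) ×ˢ Icc (v₁ - ℓ) (v₁ + ℓ) := by
        filter_upwards [Icc_mem_nhds hva hvb] with t ht using ⟨hx, ht⟩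
      have hpD := hbox hp
      obtain ⟨k0, k1, k2⟩ := hv v hv'
      have hs0 : 0 ≤ 1 - (x - x₁) / τ := by
        rw [sub_nonneg, div_le_one hτ]; linarith
      have hs1 : 1 - (x - x₁) / τ ≤ 1 := by
        have : 0 ≤ (x - x₁) / τ := div_nonneg (by linarith [hx.1]) hτ.le
        linarith
      have hw : |(v - v₁) / ℓ| ≤ 1 := by
        rw [abs_div, abs_of_pos hℓ, div_le_one hℓ, abs_le]; constructor <;> linarith
      have hw2 : ((v - v₁) / ℓ) ^ 2 ≤ 1 := by
        rw [← sq_abs]; exact pow_le_one₀ (abs_nonneg _) hw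
      have hn1 : (1 - (x - x₁) / τ) * (1 - ((v - v₁) / ℓ) ^ 2) ≤ 1 :=
        mul_le_one₀ hs1 (by linarith) (by linarith [sq_nonneg ((v - v₁) / ℓ)])
      have hN1 : |(1 - (x - x₁) / τ) * (-2 * ((v - v₁) / ℓ))| ≤ 2 := by
        rw [abs_mul, abs_mul, abs_of_nonneg hs0, abs_neg, abs_two]
        linarith [mul_le_one₀ hs1 (abs_nonneg ((v - v₁) / ℓ)) hw]
      have he : ℓ ^ 3 / τ ≤ -v * ℓ ^ 2 / τ := by
        rw [pow_succ', pow_two]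
        gcongr
      have hloc : IsLocalMax (fun t => F (x, t)) v := hnear.mono fun t ht => hmax' (x, t) ht
      have f2 := bernstein_second_deriv (n := fun t => η x t)
        (n1 := fun t => (1 - (x - x₁) / τ) * (-2 * (t - v₁) / ℓ ^ 2))
        (n2 := (1 - (x - x₁) / τ) * (-2 / ℓ ^ 2))
        (H := fun t => h (x, t)) (V := fun t => pdv h (x, t)) (X := fun t => pdx h (x, t))
        (Y := fun t => pdv (pdx h) (x, t)) (Z := pdx (pdx h) (x, v)) (v := v)
        (T := τ ^ 2) (L := 2400 * ℓ ^ 2) (B := 165000) (c := 165000 * K ^ 2 / τ * (x - x₁))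
        (by
          intro t
          have := ((((hasDerivAt_id t).sub_const v₁).div_const ℓ).pow 2).const_sub 1
          refine HasDerivAt.congr_deriv (this.const_mul (1 - (x - x₁) / τ)) ?_
          simp
          field_simp)
        (by
          have := (((hasDerivAt_id v).sub_const v₁).const_mul (-2)).div_const (ℓ ^ 2)
          refine HasDerivAt.congr_deriv (this.const_mul (1 - (x - x₁) / τ)) ?_
          simp)
        (by filter_upwards [hnear] with t ht using
              hasDerivAt_v (smooth_diffAt hD hsol.1 (hbox ht)))
        (by
          filter_upwards [hnear] with t ht
          have := hsol.2 _ (hbox ht)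
          simp only at this
          rw [this]
          exact hasDerivAt_v (smooth_diffAt hD sv (hbox ht)))
        (by filter_upwards [hnear] with t ht using hasDerivAt_v (smooth_diffAt hD sx (hbox ht)))
        (by
          have := solx.2 _ hpD
          simp only at this
          rw [this]
          exact hasDerivAt_v (smooth_diffAt hD sxv hpD))
        hloc
      have f1 := bernstein_first_deriv (n := fun t => η t v)
        (ns := - (1 / τ) * (1 - ((v - v₁) / ℓ) ^ 2))
        (H := fun t => h (t, v)) (V := fun t => pdv h (t, v)) (X := fun t => pdx h (t, v))
        (Y := pdv (pdx h) (x, v)) (Z := pdx (pdx h) (x, v)) (x₁ := x₁)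
        (T := τ ^ 2) (L := 2400 * ℓ ^ 2) (B := 165000) (c := 165000 * K ^ 2 / τ) hxb
        (by
          have := (((hasDerivAt_id x).sub_const x₁).div_const τ).const_sub 1
          exact this.mul_const (1 - ((v - v₁) / ℓ) ^ 2))
        (hasDerivAt_x (smooth_diffAt hD hsol.1 hpD))
        (by rw [← pdx_pdv_comm hD hsol.1 hpD]; exact hasDerivAt_x (smooth_diffAt hD sv hpD))
        (hasDerivAt_x (smooth_diffAt hD sx hpD))
        (fun t ht => hmax' (t, v) ⟨⟨hx.1.trans ht.1, ht.2⟩, hv'⟩)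
      have alg := bernstein_algebra (n := η x v)
        (N1 := (1 - (x - x₁) / τ) * (-2 * ((v - v₁) / ℓ))) (N2 := (1 - (x - x₁) / τ) * (-2))
        (Ns := - (1 - ((v - v₁) / ℓ) ^ 2)) (k := -v * ℓ ^ 2 / τ) (e := ℓ ^ 3 / τ)
        (p := ℓ * pdv h (x, v)) (q := τ * pdx h (x, v)) (r := τ * ℓ * pdv (pdx h) (x, v))
        (B := 165000) (K := K)
        (mul_nonneg hs0 (by linarith)) hn1 hN1 (by linarith)
        (by linarith [sq_nonneg ((v - v₁) / ℓ)])
        (by rw [le_div_iff₀ hτ]; linarith) (by rw [div_le_iff₀ hτ]; linarith)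
        (by positivity) he rfl hK
      have hvneg : v < 0 := by linarith
      have hcomb := add_nonpos f2 (mul_nonpos_of_nonneg_of_nonpos (neg_nonneg.2 hvneg.le) f1)
      have hcomb2 := mul_nonpos_of_nonneg_of_nonpos (sq_nonneg ℓ) hcomb
      refine absurd alg (not_lt.2 (le_trans (le_of_eq ?_) hcomb2))
      generalize η x v = n
      generalize pdv h (x, v) = V
      generalize pdx h (x, v) = X
      generalize pdv (pdx h) (x, v) = Y
      generalize pdx (pdx h) (x, v) = Z
      generalize h (x, v) = H
      generalize 1 - (x - x₁) / τ = s
      generalize v - v₁ = w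
      field_simp
      ring
  have h0 := (hmax' (x₁, v₁) ⟨by simp [hτ.le], by simp [hℓ.le]⟩).trans hbound
  simp [hF, hη] at h0
  have p1 : 0 ≤ τ ^ 2 * pdx h (x₁, v₁) ^ 2 := by positivity
  have p2 : 0 ≤ ℓ ^ 2 * pdv h (x₁, v₁) ^ 2 := by positivity
  have p3 : 0 ≤ h (x₁, v₁) ^ 2 := by positivity
  clear hbound hmax' hmax hFc hF hη
  clear_value F η
  constructor
  · refine abs_le_of_sq_le_sq' ?_ (by positivity) |>.2
    rw [mul_pow, mul_pow, sq_abs]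
    nlinarith
  · refine abs_le_of_sq_le_sq' ?_ (by positivity) |>.2
    rw [mul_pow, mul_pow, sq_abs]
    nlinarith

/-! ### Nested boxes and higher derivatives -/

/-- The boxes interpolating between `(0, R³) × (v₀ - R, v₀ + R)` at `θ = 0` and a box at `θ = 1`
that stays at distance `R / 2` from the lateral sides of `(0, 8R³) × (v₀ - 2R, v₀ + 2R)`, so that
`|v|` is comparable to `|v₀|` on all of them. -/
def box (v₀ R θ : ℝ) : Set P2 :=
  Ioo 0 ((1 + θ) * R ^ 3) ×ˢ Ioo (v₀ - (1 + θ / 2) * R) (v₀ + (1 + θ / 2) * R)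

theorem isOpen_box (v₀ R θ : ℝ) : IsOpen (box v₀ R θ) := isOpen_Ioo.prod isOpen_Ioo

theorem box_mono {v₀ R θ θ' : ℝ} (hR : 0 < R) (h : θ ≤ θ') : box v₀ R θ ⊆ box v₀ R θ' := by
  have h3 : (1 + θ) * R ^ 3 ≤ (1 + θ') * R ^ 3 := by gcongr
  have h1 : (1 + θ / 2) * R ≤ (1 + θ' / 2) * R := by gcongr
  exact prod_mono (Ioo_subset_Ioo le_rfl h3) (Ioo_subset_Ioo (by linarith) (by linarith))

theorem IsSol.mono {D D' : Set P2} {h : P2 → ℝ} (hs : IsSol D h) (hD : D' ⊆ D) : IsSol D' h :=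
  ⟨hs.1.mono hD, fun p hp => hs.2 p (hD hp)⟩

/-- The scales of the problem: `ρ = (|v₀| / R) ^ (1 / 2)`. -/
structure Scales (v₀ R ρ : ℝ) : Prop where
  R_pos : 0 < R
  v_le : v₀ ≤ -(2 * R)
  rho_pos : 0 < ρ
  rho_sq : ρ ^ 2 * R = -v₀

theorem Scales.one_le {v₀ R ρ : ℝ} (s : Scales v₀ R ρ) : 1 ≤ ρ := by
  obtain ⟨h1, h2, h3, h4⟩ := s
  have : 2 * R ≤ ρ ^ 2 * R := by linarith
  have := le_of_mul_le_mul_right this h1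
  nlinarith

theorem Scales.v_mul {v₀ R ρ : ℝ} (s : Scales v₀ R ρ) : -v₀ * R⁻¹ ^ 3 = (ρ / R) ^ 2 := by
  have := s.R_pos
  rw [← s.rho_sq]
  field_simp

theorem Scales.inv_le {v₀ R ρ : ℝ} (s : Scales v₀ R ρ) : R⁻¹ ^ 3 ≤ (ρ / R) ^ 3 := by
  have := s.R_pos
  have h1 := s.one_le
  gcongr
  rw [inv_eq_one_div]
  gcongr

theorem Scales.v_mem {v₀ R ρ θ : ℝ} (s : Scales v₀ R ρ) (hθ : θ ≤ 1) {p : P2}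
    (hp : p ∈ box v₀ R θ) : -v₀ / 4 ≤ -p.2 ∧ -p.2 ≤ 7 / 4 * -v₀ := by
  have h1 := s.R_pos
  have h2 := s.v_le
  have h3 : (1 + θ / 2) * R ≤ 3 / 2 * R := by gcongr; linarith
  obtain ⟨h4, h5⟩ := hp.2
  constructor <;> linarith

/-- `bernstein_step` between consecutive boxes, with `τ = (θ' - θ)² R³ / 16` and
`ℓ = (θ' - θ) R / (4ρ)`, for which `-v ℓ² / τ = v / v₀`. -/
theorem one_step {v₀ R ρ θ θ' K : ℝ} {h : P2 → ℝ} (s : Scales v₀ R ρ) (hθ : 0 ≤ θ)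
    (hlt : θ < θ') (hθ' : θ' ≤ 1) (hs : IsSol (box v₀ R θ') h) (hK : 0 < K)
    (hb : ∀ p ∈ box v₀ R θ', |h p| ≤ K) {p : P2} (hp : p ∈ box v₀ R θ) :
    |pdx h p| ≤ 9600 / (θ' - θ) ^ 2 * R⁻¹ ^ 3 * K ∧
      |pdv h p| ≤ 2400 / (θ' - θ) * (ρ / R) * K := by
  obtain ⟨x₁, v₁⟩ := p
  have hR := s.R_pos
  have hρ := s.rho_pos
  have hρ1 := s.one_le
  set d := θ' - θ with hd
  have hd0 : 0 < d := by linarith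
  have hd1 : d ≤ 1 := by linarith
  have hℓR : d * R / (4 * ρ) ≤ d * R / 4 := by gcongr; linarith
  have hbox : Icc x₁ (x₁ + d ^ 2 * R ^ 3 / 16) ×ˢ
      Icc (v₁ - d * R / (4 * ρ)) (v₁ + d * R / (4 * ρ)) ⊆ box v₀ R θ' := by
    rintro ⟨x, v⟩ ⟨⟨hx1, hx2⟩, hv1, hv2⟩
    obtain ⟨⟨h1, h2⟩, h3, h4⟩ := hp
    simp only at hx1 hx2 hv1 hv2 h1 h2 h3 h4
    have hR3 : 0 < R ^ 3 := by positivity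
    have e1 : d ^ 2 * R ^ 3 ≤ d * R ^ 3 := by gcongr; nlinarith
    have e2 : 0 < d * R ^ 3 := by positivity
    have e3 : (1 + θ') * R ^ 3 = (1 + θ) * R ^ 3 + d * R ^ 3 := by rw [hd]; ring
    have e4 : (1 + θ' / 2) * R = (1 + θ / 2) * R + d * R / 2 := by rw [hd]; ring
    have e5 : 0 < d * R := by positivity
    refine ⟨⟨by simp only; linarith, by simp only; linarith⟩,
      by simp only; linarith, by simp only; linarith⟩
  have key := bernstein_step (isOpen_box v₀ R θ') hs (x₁ := x₁) (v₁ := v₁)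
    (τ := d ^ 2 * R ^ 3 / 16) (ℓ := d * R / (4 * ρ)) (by positivity) (by positivity) hK hbox
    (fun p hp => hb p (hbox hp))
    (by
      intro v hv
      have hx₁ : x₁ ∈ Icc x₁ (x₁ + d ^ 2 * R ^ 3 / 16) := ⟨le_rfl, by
        have : 0 < d ^ 2 * R ^ 3 / 16 := by positivity
        linarith⟩
      obtain ⟨q1, q2⟩ := s.v_mem hθ' (hbox (mk_mem_prod hx₁ hv))
      simp only at q1 q2
      rw [← s.rho_sq] at q1 q2
      have hv2 := s.v_le
      rw [show v₀ = -(ρ ^ 2 * R) by rw [s.rho_sq]; ring] at hv2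
      have e1 : -v * (d * R / (4 * ρ)) ^ 2 = (-v) * (d ^ 2 * R ^ 2 / (16 * ρ ^ 2)) := by
        field_simp; norm_num
      have e2 : d ^ 2 * R ^ 3 / 16 = (ρ ^ 2 * R) * (d ^ 2 * R ^ 2 / (16 * ρ ^ 2)) := by
        field_simp
      have e3 : 0 ≤ d ^ 2 * R ^ 2 / (16 * ρ ^ 2) := by positivity
      refine ⟨?_, ?_, ?_⟩
      · rw [e1, e2, ← mul_assoc]
        exact mul_le_mul_of_nonneg_right (by linarith) e3
      · rw [e1, e2, ← mul_assoc]
        exact mul_le_mul_of_nonneg_right (by linarith) e3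
      · have : d * R ≤ 1 * R := by gcongr
        linarith)
  obtain ⟨k1, k2⟩ := key
  constructor
  · have e : 9600 / d ^ 2 * R⁻¹ ^ 3 * K = 600 * K / (d ^ 2 * R ^ 3 / 16) := by
      field_simp; norm_num
    rw [e, le_div_iff₀ (by positivity)]
    linarith
  · have e : 2400 / d * (ρ / R) * K = 600 * K / (d * R / (4 * ρ)) := by
      field_simp; norm_num
    rw [e, le_div_iff₀ (by positivity)]
    linarith

/-- Since `∂ₓh` is again a solution, `one_step` can be iterated. -/
theorem x_estimate (i : ℕ) : ∀ θ θ' : ℝ, 0 ≤ θ → θ < θ' → θ' ≤ 1 → ∃ C : ℝ, 0 < C ∧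
    ∀ (v₀ R ρ K : ℝ) (h : P2 → ℝ), Scales v₀ R ρ → IsSol (box v₀ R θ') h → 0 < K →
      (∀ p ∈ box v₀ R θ', |h p| ≤ K) →
      ∀ p ∈ box v₀ R θ, |pdx^[i] h p| ≤ C * (R⁻¹ ^ 3) ^ i * K := by
  induction i with
  | zero =>
    intro θ θ' h0 hlt h1
    refine ⟨1, one_pos, fun v₀ R ρ K h s hs hK hb p hp => ?_⟩
    simpa using hb p (box_mono s.R_pos hlt.le hp)
  | succ i ih =>
    intro θ θ' h0 hlt h1
    obtain ⟨C, hC, H⟩ := ih θ ((θ + θ') / 2) h0 (by linarith) (by linarith)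
    have hd : 0 < θ' - (θ + θ') / 2 := by linarith
    refine ⟨C * (9600 / (θ' - (θ + θ') / 2) ^ 2), by positivity,
      fun v₀ R ρ K h s hs hK hb p hp => ?_⟩
    have hR := s.R_pos
    have := H v₀ R ρ (9600 / (θ' - (θ + θ') / 2) ^ 2 * R⁻¹ ^ 3 * K) (pdx h) s
      ((hs.pdx (isOpen_box _ _ _)).mono (box_mono hR (by linarith))) (by positivity)
      (fun q hq => (one_step s (by linarith) (by linarith) h1 hs hK hb hq).1) p hp
    rw [Function.iterate_succ_apply]
    refine this.trans (le_of_eq ?_)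
    rw [pow_succ (R⁻¹ ^ 3)]
    ring

/-- Two `v`-derivatives are traded for one `x`-derivative by `∂ᵥʲ⁺² h = ∂ᵥʲ (v ∂ₓh)`, and the
induction hypothesis is applied to the solution `∂ₓh`. -/
theorem v_estimate (j : ℕ) : ∀ θ θ' : ℝ, 0 ≤ θ → θ < θ' → θ' ≤ 1 → ∃ C : ℝ, 0 < C ∧
    ∀ (v₀ R ρ K : ℝ) (h : P2 → ℝ), Scales v₀ R ρ → IsSol (box v₀ R θ') h → 0 < K →
      (∀ p ∈ box v₀ R θ', |h p| ≤ K) →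
      ∀ p ∈ box v₀ R θ, |pdv^[j] h p| ≤ C * (ρ / R) ^ j * K := by
  induction j using Nat.strong_induction_on with
  | _ j ih =>
  intro θ θ' h0 hlt h1
  rcases j with _ | _ | j
  · refine ⟨1, one_pos, fun v₀ R ρ K h s hs hK hb p hp => ?_⟩
    simpa using hb p (box_mono s.R_pos hlt.le hp)
  · refine ⟨2400 / (θ' - θ), div_pos (by norm_num) (by linarith),
      fun v₀ R ρ K h s hs hK hb p hp => ?_⟩
    simpa using (one_step s h0 hlt h1 hs hK hb hp).2
  · obtain ⟨C₀, hC₀, H₀⟩ := ih j (by omega) θ ((θ + θ') / 2) h0 (by linarith) (by linarith)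
    obtain ⟨C₁, hC₁, H₁⟩ := ih (j - 1) (by omega) θ ((θ + θ') / 2) h0 (by linarith) (by linarith)
    have hd : 0 < θ' - (θ + θ') / 2 := by linarith
    obtain ⟨E, hE⟩ : ∃ E, E = 9600 / (θ' - (θ + θ') / 2) ^ 2 := ⟨_, rfl⟩
    have hE0 : 0 < E := by rw [hE]; positivity
    refine ⟨(7 / 4 * C₀ + j * C₁) * E, by positivity, fun v₀ R ρ K h s hs hK hb p hp => ?_⟩
    have hR := s.R_pos
    have hρ := s.rho_pos
    have hbx : ∀ q ∈ box v₀ R ((θ + θ') / 2), |pdx h q| ≤ E * R⁻¹ ^ 3 * K := fun q hq => by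
      rw [hE]; exact (one_step s (by linarith) (by linarith) h1 hs hK hb hq).1
    have hsx : IsSol (box v₀ R ((θ + θ') / 2)) (pdx h) :=
      (hs.pdx (isOpen_box _ _ _)).mono (box_mono hR (by linarith))
    have b0 := H₀ v₀ R ρ _ (pdx h) s hsx (by positivity) hbx p hp
    have b1 := H₁ v₀ R ρ _ (pdx h) s hsx (by positivity) hbx p hp
    have hO := isOpen_box v₀ R θ'
    have hp' : p ∈ box v₀ R θ' := box_mono hR hlt.le hp
    have hpde : EqOn (pdv (pdv h)) (fun p => p.2 * pdx h p) (box v₀ R θ') :=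
      fun q hq => (hs.2 q hq).symm
    rw [Function.iterate_succ_apply, Function.iterate_succ_apply, pdv_iter_congr hO hpde j hp',
      pdv_iter_snd_mul hO (smooth_pdx hO hs.1) j hp']
    have hv : |p.2| ≤ 7 / 4 * -v₀ := by
      have := s.v_mem h1 hp'
      have := s.v_le
      rw [abs_le]
      constructor <;> linarith
    have t0 : |p.2 * pdv^[j] (pdx h) p| ≤ 7 / 4 * C₀ * E * (ρ / R) ^ (j + 2) * K := by
      rw [abs_mul]
      calc |p.2| * |pdv^[j] (pdx h) p|
          ≤ (7 / 4 * -v₀) * (C₀ * (ρ / R) ^ j * (E * R⁻¹ ^ 3 * K)) := by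
            gcongr
            exact (abs_nonneg _).trans hv
        _ = 7 / 4 * C₀ * E * (ρ / R) ^ j * (-v₀ * R⁻¹ ^ 3) * K := by ring
        _ = _ := by rw [s.v_mul, pow_add]; ring
    have t1 : |j * pdv^[j - 1] (pdx h) p| ≤ j * C₁ * E * (ρ / R) ^ (j + 2) * K := by
      rcases j with _ | j
      · simp
      · rw [abs_mul, Nat.abs_cast]
        calc ((j + 1 : ℕ) : ℝ) * |pdv^[j + 1 - 1] (pdx h) p|
            ≤ ((j + 1 : ℕ) : ℝ) * (C₁ * (ρ / R) ^ j * (E * (ρ / R) ^ 3 * K)) := by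
              refine mul_le_mul_of_nonneg_left (b1.trans ?_) (by positivity)
              rw [Nat.add_sub_cancel]
              have := s.inv_le
              gcongr
          _ = _ := by ring
    calc |p.2 * pdv^[j] (pdx h) p + j * pdv^[j - 1] (pdx h) p| ≤ _ := abs_add_le _ _
      _ ≤ _ := add_le_add t0 t1
      _ = _ := by ring

theorem statement_15 :
    ∀ i j : ℕ, ∃ c : ℝ, 0 < c ∧
      ∀ (v₀ R : ℝ) (h : P2 → ℝ),
        v₀ < 0 → 0 < R → v₀ ≤ -(2 * R) →
        ContDiffOn ℝ ((⊤ : ℕ∞) : WithTop ℕ∞) h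
          (Set.Ioo 0 (8 * R ^ 3) ×ˢ Set.Ioo (v₀ - 2 * R) (v₀ + 2 * R)) →
        (∀ p ∈ Set.Ioo 0 (8 * R ^ 3) ×ˢ Set.Ioo (v₀ - 2 * R) (v₀ + 2 * R),
          p.2 * pdx h p = pdv (pdv h) p) →
        ∀ K : ℝ,
          (∀ p ∈ Set.Ioo 0 (8 * R ^ 3) ×ˢ Set.Ioo (v₀ - 2 * R) (v₀ + 2 * R), |h p| ≤ K) →
          ∀ p ∈ Set.Ioo 0 (R ^ 3) ×ˢ Set.Ioo (v₀ - R) (v₀ + R),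
            |(pdx^[i] (pdv^[j] h)) p|
              ≤ c * R ^ (-(3 * (i : ℝ) + (j : ℝ))) * (|v₀| / R) ^ ((3 * (i : ℝ) + (j : ℝ)) / 2)
                * K := by
  intro i j
  obtain ⟨C₁, hC₁, H₁⟩ := x_estimate i (1 / 2) 1 (by norm_num) (by norm_num) le_rfl
  obtain ⟨C₂, hC₂, H₂⟩ := v_estimate j 0 (1 / 2) le_rfl (by norm_num) (by norm_num)
  refine ⟨C₂ * C₁, by positivity, fun v₀ R h hv₀ hR hvR hsm hpde K hb p hp => ?_⟩
  obtain ⟨ρ, hρdef⟩ : ∃ ρ, ρ = √(|v₀| / R) := ⟨_, rfl⟩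
  have hv : 0 < |v₀| / R := div_pos (abs_pos.2 hv₀.ne) hR
  have hρsq : ρ ^ 2 = |v₀| / R := by rw [hρdef, Real.sq_sqrt hv.le]
  have hρ : 0 < ρ := by rw [hρdef]; exact Real.sqrt_pos.2 hv
  have s : Scales v₀ R ρ := ⟨hR, hvR, hρ, by
    rw [hρsq, div_mul_cancel₀ _ hR.ne', abs_of_neg hv₀]⟩
  have hsub : box v₀ R 1 ⊆ Ioo 0 (8 * R ^ 3) ×ˢ Ioo (v₀ - 2 * R) (v₀ + 2 * R) := by
    have : 0 < R ^ 3 := by positivity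
    exact prod_mono (Ioo_subset_Ioo le_rfl (by linarith))
      (Ioo_subset_Ioo (by linarith) (by linarith))
  have hsol : IsSol (box v₀ R 1) h := IsSol.mono ⟨hsm, hpde⟩ hsub
  have hp0 : p ∈ box v₀ R 0 := by simpa [box] using hp
  have hweight : R ^ (-(3 * (i : ℝ) + (j : ℝ))) * (|v₀| / R) ^ ((3 * (i : ℝ) + (j : ℝ)) / 2)
      = (ρ / R) ^ (3 * i + j) := by
    have e : (3 * (i : ℝ) + (j : ℝ)) = ((3 * i + j : ℕ) : ℝ) := by push_cast; ring
    rw [e, ← hρsq, Real.rpow_neg hR.le, Real.rpow_natCast, ← Real.rpow_natCast ρ 2,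
      ← Real.rpow_mul hρ.le]
    rw [show ((2 : ℕ) : ℝ) * (((3 * i + j : ℕ) : ℝ) / 2) = ((3 * i + j : ℕ) : ℝ) by
      push_cast; ring, Real.rpow_natCast, div_pow, div_eq_inv_mul]
  rw [mul_assoc (C₂ * C₁), hweight]
  have hK0 : 0 ≤ K := (abs_nonneg _).trans (hb p (hsub (box_mono hR zero_le_one hp0)))
  -- the estimates need a positive bound, so `K` is first enlarged
  have main : ∀ ε > 0, |(pdx^[i] (pdv^[j] h)) p| ≤ C₂ * C₁ * (ρ / R) ^ (3 * i + j) * (K + ε) := by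
    intro ε hε
    have hb1 := H₁ v₀ R ρ (K + ε) h s hsol (by positivity)
      (fun q hq => (hb q (hsub hq)).trans (by linarith))
    have hsolx : ∀ n, IsSol (box v₀ R 1) (pdx^[n] h) := by
      intro n
      induction n with
      | zero => exact hsol
      | succ n ih => rw [Function.iterate_succ_apply']; exact ih.pdx (isOpen_box _ _ _)
    have hb2 := H₂ v₀ R ρ _ (pdx^[i] h) s ((hsolx i).mono (box_mono hR (by norm_num)))
      (by positivity) hb1 p hp0
    rw [pdx_iter_pdv_iter_comm (isOpen_box _ _ _) hsol.1 i j (box_mono hR zero_le_one hp0)]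
    refine hb2.trans ?_
    have : (R⁻¹ ^ 3) ^ i ≤ ((ρ / R) ^ 3) ^ i := by
      have := s.inv_le
      gcongr
    calc C₂ * (ρ / R) ^ j * (C₁ * (R⁻¹ ^ 3) ^ i * (K + ε))
        ≤ C₂ * (ρ / R) ^ j * (C₁ * ((ρ / R) ^ 3) ^ i * (K + ε)) := by gcongr
      _ = _ := by rw [pow_add, pow_mul]; ring
  have hW : 0 < C₂ * C₁ * (ρ / R) ^ (3 * i + j) := by positivity
  rw [← div_le_iff₀' hW]
  refine le_of_forall_pos_le_add fun ε hε => ?_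
  rw [div_le_iff₀' hW]
  exact main ε hε
end
end
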